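/- Let q be a prime power and write q^3 − 1 = k·P with gcd(k, P) = 1 and ω(P) = s ≥ 1, where the radical of P is p_1⋯p_s for distinct primes p_i. Set δ = 1 − 2·Σ_{i=1}^{s} 1/p_i, and let C_q = 2 if q is even and C_q = 3 if q is odd. If δ > 0 and q^{1/2} > C_q·2^{2ω(k)}·(2 + (2s − 1)/δ), then for every a in F_q there exists a primitive element ξ of F_{q^3} such that ξ + ξ^{-1} is also a primitive element of F_{q^3} and Tr(ξ) = a. -/

import Mathlib

namespace Weil16
open Polynomial

section Nonvanish
variable {E : Type*} [Field E]

/-- substitution `x ↦ X`, `Y ↦ X^P` -/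
noncomputable def ev (E : Type*) [Field E] (P : ℕ) : E[X][X] →+* E[X] :=
  eval₂RingHom (expand E P : E[X] →+* E[X]) X

lemma ev_eq_sum (P : ℕ) (A : E[X][X]) (n : ℕ) (hn : A.natDegree < n) :
    ev E P A = ∑ i ∈ Finset.range n, expand E P (A.coeff i) * X ^ i := by
  simp only [ev, coe_eval₂RingHom]
  rw [eval₂_eq_sum_range' _ hn]
  rfl

lemma ev_inj {P : ℕ} (A : E[X][X]) (hA : A.natDegree < P) (h : ev E P A = 0) : A = 0 := by
  have hP : 0 < P := by omega
  ext i j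
  by_cases hi : i < P
  · have h2 := congrArg (fun f => f.coeff (j * P + i)) h
    simp only [ev_eq_sum P A P hA, finsetSum_coeff, coeff_zero] at h2
    rw [Finset.sum_eq_single i] at h2
    · rw [coeff_mul_X_pow', if_pos (by omega)] at h2
      simpa [coeff_expand hP, Nat.mul_div_cancel _ hP] using h2
    · intro b hb hbi
      rw [coeff_mul_X_pow', coeff_expand hP]
      simp only [Finset.mem_range] at hb
      split_ifs with h3 h4
      · exfalso
        apply hbi
        have h5 : (j * P + i) ≡ b [MOD P] := by
          have := (Nat.modEq_iff_dvd' h3).2 h4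
          exact this.symm
        have h6 : i ≡ b [MOD P] := by
          have : (j * P + i) ≡ i [MOD P] := by simp [Nat.ModEq]
          exact this.symm.trans h5
        exact (Nat.ModEq.eq_of_lt_of_lt h6 hi hb).symm
      · rfl
      · rfl
    · intro h3; simp [hi] at h3
  · have h9 : A.coeff i = 0 := coeff_eq_zero_of_natDegree_lt (by omega)
    simp [h9]

lemma natDegree_det_le' {R : Type*} [CommRing R] {n : ℕ} (M : Matrix (Fin n) (Fin n) R[X]) (D : ℕ)
    (hM : ∀ i j, (M i j).natDegree ≤ D) : M.det.natDegree ≤ n * D := by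
  rw [Matrix.det_apply]
  refine natDegree_sum_le_of_forall_le _ _ ?_
  intro σ _
  refine (natDegree_smul_le _ _).trans ?_
  refine (natDegree_prod_le _ _).trans ?_
  refine (Finset.sum_le_sum (fun i _ => hM _ _)).trans ?_
  simp

lemma natDegree_resultant_le {R : Type*} [CommRing R] (f g : R[X][X]) (m n D : ℕ)
    (hf : ∀ i, (f.coeff i).natDegree ≤ D) (hg : ∀ i, (g.coeff i).natDegree ≤ D) :
    (f.resultant g m n).natDegree ≤ (m + n) * D := by
  apply natDegree_det_le'
  intro i j
  rw [sylvester, Matrix.of_apply]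
  refine Fin.addCases (fun j => ?_) (fun j => ?_) j
  · rw [Fin.addCases_left]; split_ifs
    · exact hg _
    · simp
  · rw [Fin.addCases_right]; split_ifs
    · exact hf _
    · simp

lemma mult_eq {R : Type*} [CommRing R] [IsDomain R] [IsNoetherianRing R] {π u v f g : R} (hπ : Prime π)
    (d k a : ℕ) (hu : u ≠ 0) (hv : v ≠ 0)
    (hfa : π ^ a ∣ f) (hfa' : ¬ π ^ (a + 1) ∣ f) (hg : ¬ π ∣ g) 
    {e : R} (he : e = 1 ∨ e = -1) (heq : u ^ d * f ^ k = e * (v ^ d * g ^ k)) : d ∣ k * a := by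
  have hf : emultiplicity π f = a := by
    rw [emultiplicity_eq_coe]; exact ⟨hfa, hfa'⟩
  have h1 := congrArg (emultiplicity π) heq
  have he' : emultiplicity π (e * (v ^ d * g ^ k)) = emultiplicity π (v ^ d * g ^ k) := by
    rcases he with rfl | rfl
    · rw [one_mul]
    · rw [neg_one_mul, emultiplicity_neg]
  rw [he', emultiplicity_mul hπ, emultiplicity_mul hπ, emultiplicity_pow hπ, emultiplicity_pow hπ, emultiplicity_pow hπ,
    emultiplicity_pow hπ, hf, emultiplicity_eq_zero.2 hg] at h1
  have hu' : FiniteMultiplicity π u := FiniteMultiplicity.of_prime_left hπ hu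
  have hv' : FiniteMultiplicity π v := FiniteMultiplicity.of_prime_left hπ hv
  rw [hu'.emultiplicity_eq_multiplicity, hv'.emultiplicity_eq_multiplicity] at h1
  have h2 : d * multiplicity π u + k * a = d * multiplicity π v := by
    have : ((d * multiplicity π u + k * a : ℕ) : ℕ∞) = ((d * multiplicity π v : ℕ) : ℕ∞) := by
      push_cast; simpa using h1
    exact_mod_cast this
  exact (Nat.dvd_add_right (Dvd.intro _ rfl)).1 (Dvd.intro _ h2.symm)

/-- nondegeneracy of `f` relative to `d` -/
def ND (d : ℕ) (h : E[X]) : Prop :=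
  ∀ k, 0 < k → k < d → ∃ (π : E[X]) (a : ℕ), Prime π ∧ π ^ a ∣ h ∧ ¬ π ^ (a + 1) ∣ h ∧ ¬ d ∣ k * a

noncomputable def Phi (d : ℕ) (h hs : E[X]) : E[X][X][X] :=
  C (h.map C) * X ^ d - C (C hs)

lemma not_dvd_CC (π hs : E[X]) (hπ : Prime π) (hhs : hs ≠ 0) : ¬ (π.map C : E[X][X]) ∣ C hs := by
  rintro ⟨w, hw⟩
  have h1 := congrArg natDegree hw
  have hne : (π.map C : E[X][X]) ≠ 0 := by
    rw [Ne, Polynomial.map_eq_zero_iff C_injective]; exact hπ.ne_zero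
  have hw0 : w ≠ 0 := by
    rintro rfl; simp [hhs] at hw
  rw [natDegree_C, natDegree_mul hne hw0, natDegree_map_eq_of_injective C_injective] at h1
  have := hπ.irreducible.natDegree_pos
  omega

lemma swap_dvd_iff (a b : E[X]) : (a.map C : E[X][X]) ∣ b.map C ↔ a ∣ b := by
  constructor
  · rintro h
    have := map_dvd (mapRingHom (evalRingHom (0:E))) h
    have h0 : (evalRingHom (0:E)).comp (C : E →+* E[X]) = RingHom.id E := by ext; simp
    simpa [Polynomial.map_map, coe_mapRingHom, h0] using this
  · exact fun h => map_dvd (mapRingHom C) h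

lemma prime_map_C (π : E[X]) (hπ : Prime π) : Prime (π.map C : E[X][X]) := by
  have h1 : Prime (C π : E[X][X]) := prime_C_iff.2 hπ
  have h2 := (MulEquiv.prime_iff (Polynomial.Bivariate.swap (R := E)).toMulEquiv (p := (C π : E[X][X]))).2 h1
  have h3 : (Polynomial.Bivariate.swap (R := E)).toMulEquiv (C π) = π.map C := by
    change Polynomial.Bivariate.swap (C π) = π.map C
    rw [Polynomial.Bivariate.swap_C]
  rwa [h3] at h2

lemma pow_natDegree_eq {K : Type*} [Field K] (g : K[X]) (hg : g.Monic) (d : ℕ) (a b : K)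
    (hdvd : g ∣ C a * X ^ d - C b) : ∃ c ε : K, (ε = 1 ∨ ε = -1) ∧ c ^ d * a ^ g.natDegree = ε * b ^ g.natDegree := by
  let L := AlgebraicClosure K
  let φ := algebraMap K L
  refine ⟨g.coeff 0, ((-1) ^ g.natDegree) ^ d, ?_, ?_⟩
  · rcases neg_one_pow_eq_or K (g.natDegree) with h | h
    · simp [h]
    · rw [h]; exact neg_one_pow_eq_or K d
  · apply φ.injective
    have hs : (g.map φ).Splits := IsAlgClosed.splits _
    have h0 := hs.coeff_zero_eq_prod_roots_of_monic (hg.map φ)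
    have hr : ∀ t ∈ (g.map φ).roots, φ a * t ^ d = φ b := by
      intro t ht
      have h1 : (g.map φ).eval t = 0 := (mem_roots'.1 ht).2
      have h2 := map_dvd (mapRingHom φ) hdvd
      have h3 := eval_dvd (x := t) h2
      simp only [coe_mapRingHom, h1, zero_dvd_iff] at h3
      simpa [sub_eq_zero] using h3
    have hcard : (g.map φ).roots.card = g.natDegree := by
      rw [← hs.natDegree_eq_card_roots, hg.natDegree_map]
    have hprod : (g.map φ).roots.prod ^ d * φ a ^ g.natDegree = φ b ^ g.natDegree := by
      rw [← hcard]
      have : ∀ s : Multiset L, (∀ t ∈ s, φ a * t ^ d = φ b) → s.prod ^ d * φ a ^ s.card = φ b ^ s.card := by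
        intro s
        induction s using Multiset.induction with
        | empty => simp
        | cons x s ih =>
          intro h
          simp only [Multiset.prod_cons, Multiset.card_cons]
          rw [pow_succ, pow_succ, ← ih (fun t ht => h t (Multiset.mem_cons_of_mem ht)), ← h x (Multiset.mem_cons_self _ _)]
          ring
      exact this _ hr
    rw [coeff_map, hg.natDegree_map] at h0
    simp only [map_mul, map_pow, map_neg, map_one]
    rw [h0, mul_pow, mul_assoc, hprod]

lemma coprime_aux (d : ℕ) (h hs : E[X]) (hnd : ND d h) (hh : h ≠ 0) (hhs : hs ≠ 0)
    (A : E[X][X][X]) (hA : A ≠ 0) (hAd : A.natDegree < d) :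
    IsCoprime (A.map (algebraMap E[X][X] (FractionRing E[X][X])))
      ((Phi d h hs).map (algebraMap E[X][X] (FractionRing E[X][X]))) := by
  classical
  set K := FractionRing E[X][X]
  set φ := algebraMap E[X][X] K
  have hφ : Function.Injective φ := IsFractionRing.injective _ _
  have hA' : A.map φ ≠ 0 := by rwa [Ne, Polynomial.map_eq_zero_iff hφ]
  by_contra hcop
  set g := EuclideanDomain.gcd (A.map φ) ((Phi d h hs).map φ) with hg
  have hgne : g ≠ 0 := by rw [hg, Ne, EuclideanDomain.gcd_eq_zero_iff]; tauto
  have hgn : g.natDegree ≠ 0 := by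
    intro h0
    apply hcop
    rw [← EuclideanDomain.gcd_isUnit_iff, Polynomial.isUnit_iff_degree_eq_zero, degree_eq_natDegree hgne, h0]; rfl
  have hgA : g ∣ A.map φ := EuclideanDomain.gcd_dvd_left _ _
  have hgP : g ∣ (Phi d h hs).map φ := EuclideanDomain.gcd_dvd_right _ _
  have hgd : g.natDegree < d := by
    have := natDegree_le_of_dvd hgA hA'
    rw [natDegree_map_eq_of_injective hφ] at this
    omega
  set g' := C g.leadingCoeff⁻¹ * g
  have hl : g.leadingCoeff⁻¹ ≠ 0 := by simpa using hgne
  have hg'm : g'.Monic := by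
    rw [Monic, leadingCoeff_mul, leadingCoeff_C, inv_mul_cancel₀]; simpa using hgne
  have hg'd : g'.natDegree = g.natDegree := natDegree_C_mul hl
  have hg'P : g' ∣ (Phi d h hs).map φ := by
    rwa [show g' = C g.leadingCoeff⁻¹ * g from rfl, (isUnit_C.2 (isUnit_iff_ne_zero.2 hl)).mul_left_dvd]
  have hPhi : (Phi d h hs).map φ = C (φ (h.map C)) * X ^ d - C (φ (C hs)) := by
    simp [Phi]
  rw [hPhi] at hg'P
  obtain ⟨c, ε, hε, hc⟩ := pow_natDegree_eq g' hg'm d _ _ hg'P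
  rw [hg'd] at hc
  obtain ⟨π, a, hπ, h1, h2, h3⟩ := hnd g.natDegree (by omega) hgd
  obtain ⟨n, m, hm, hcm⟩ := IsFractionRing.div_surjective (A := E[X][X]) c
  have hm0 : m ≠ 0 := nonZeroDivisors.ne_zero hm
  have hm0' : φ m ≠ 0 := by rwa [Ne, map_eq_zero_iff φ hφ]
  obtain ⟨e, he, heφ⟩ : ∃ e : E[X][X], (e = 1 ∨ e = -1) ∧ φ e = ε := by
    rcases hε with h | h
    · exact ⟨1, by simp, by simp [h]⟩
    · exact ⟨-1, by simp, by simp [h]⟩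
  have hc2 : n ^ d * (h.map C) ^ g.natDegree = e * (m ^ d * (C hs) ^ g.natDegree) := by
    apply hφ
    simp only [map_mul, map_pow, heφ]
    change φ n / φ m = c at hcm
    rw [div_eq_iff hm0'] at hcm
    rw [hcm, mul_pow]
    linear_combination (φ m)^d * hc
  have hn0 : n ≠ 0 := by
    rintro rfl
    rw [zero_pow (by omega), zero_mul] at hc2
    have : e ≠ 0 := by rcases he with h | h <;> simp [h]
    have h4 : (C hs : E[X][X]) ≠ 0 := by simpa using hhs
    exact (mul_ne_zero this (mul_ne_zero (pow_ne_zero _ hm0) (pow_ne_zero _ h4))) hc2.symm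
  apply h3
  refine mult_eq (prime_map_C π hπ) d _ a hn0 hm0 ?_ ?_ (not_dvd_CC π hs hπ hhs) he hc2
  · rw [← Polynomial.map_pow, swap_dvd_iff]; exact h1
  · rw [← Polynomial.map_pow, swap_dvd_iff]; exact h2

lemma nonvanish (d P D : ℕ) (h hs u : E[X]) (hnd : ND d h) (hh : h ≠ 0) (hhs : hs ≠ 0)
    (hu : h * u ^ d = expand E P hs) (A : ℕ → E[X][X]) (hD : ∀ k, (A k).natDegree ≤ D)
    (hDh : h.natDegree ≤ D) (hP : (2 * d) * D < P) (k₀ : ℕ) (hk₀ : k₀ < d) (hk : A k₀ ≠ 0) :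
    ∑ k ∈ Finset.range d, ev E P (A k) * u ^ k ≠ 0 := by
  intro h0
  set B : E[X][X][X] := ∑ k ∈ Finset.range d, C (A k) * X ^ k with hB
  have hBc : ∀ i, B.coeff i = if i < d then A i else 0 := by
    intro i
    simp [hB, finsetSum_coeff, coeff_C_mul, coeff_X_pow]
  have hB0 : B ≠ 0 := by
    intro h1
    have := hBc k₀
    rw [if_pos hk₀, h1] at this
    exact hk (by simpa using this.symm)
  have hBd : B.natDegree < d := by
    rw [natDegree_lt_iff_degree_lt hB0]
    rw [degree_lt_iff_coeff_zero]
    intro m hm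
    rw [hBc, if_neg (by omega)]
  have hcop := coprime_aux d h hs hnd hh hhs B hB0 hBd
  set φ := algebraMap E[X][X] (FractionRing E[X][X])
  have hφ : Function.Injective φ := IsFractionRing.injective _ _
  have hres : B.resultant (Phi d h hs) ≠ 0 := by
    intro h1
    have h2 := congrArg φ h1
    rw [← resultant_map_map, map_zero] at h2
    have h3 := (resultant_eq_zero_iff (f := B.map φ) (g := (Phi d h hs).map φ)).1 (by
      rw [natDegree_map_eq_of_injective hφ, natDegree_map_eq_of_injective hφ]; exact h2)
    exact h3.2 hcop
  have hd : 0 < d := by omega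
  have hPd : (Phi d h hs).natDegree ≤ d := by
    refine (natDegree_sub_le _ _).trans ?_
    rw [natDegree_C]
    exact max_le (natDegree_C_mul_X_pow_le _ _) (by omega)
  have hPd2 : (Phi d h hs).natDegree ≠ 0 := by
    have : (Phi d h hs).coeff d ≠ 0 := by
      simp only [Phi, coeff_sub, coeff_C_mul, coeff_X_pow_self, mul_one, coeff_C, if_neg hd.ne', sub_zero]
      rwa [Ne, Polynomial.map_eq_zero_iff C_injective]
    have := le_natDegree_of_ne_zero this
    omega
  obtain ⟨p, q, -, -, hpq⟩ := exists_mul_add_mul_eq_C_resultant B (Phi d h hs) le_rfl le_rfl (Or.inr hPd2)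
  have hev : ev E P (B.resultant (Phi d h hs)) = 0 := by
    have h1 := congrArg (eval₂ (ev E P) u) hpq
    rw [eval₂_add, eval₂_mul, eval₂_mul, eval₂_C] at h1
    have h2 : eval₂ (ev E P) u B = 0 := by
      rw [hB, eval₂_finsetSum, ← h0]
      simp
    have h3 : eval₂ (ev E P) u (Phi d h hs) = 0 := by
      have h4 : ev E P (h.map C) = h := by
        simp only [ev, coe_eval₂RingHom, eval₂_map]
        have : ((expand E P : E[X] →+* E[X]).comp C) = C := by ext; simp
        rw [this, eval₂_C_X]
      have h5 : ev E P (C hs) = expand E P hs := by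
        simp [ev]
      simp only [Phi, eval₂_sub, eval₂_mul, eval₂_C, eval₂_X_pow, h4, h5, hu, sub_self]
    rw [← h1, h2, h3]; simp
  apply hres
  apply ev_inj _ _ hev
  refine lt_of_le_of_lt (natDegree_resultant_le _ _ _ _ D ?_ ?_) ?_
  · intro i; rw [hBc]; split_ifs
    · exact hD _
    · simp
  · intro i
    simp only [Phi, coeff_sub, coeff_C_mul, coeff_X_pow, coeff_C]
    refine (natDegree_sub_le _ _).trans (max_le ?_ ?_)
    · split_ifs
      · rw [mul_one, natDegree_map_eq_of_injective C_injective]; exact hDh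
      · simp
    · split_ifs
      · simp
      · simp
  · refine lt_of_le_of_lt (Nat.mul_le_mul_right _ ?_) hP
    omega

end Nonvanish
end Weil16


namespace Weil16
open Polynomial

section Stepanov
variable {E : Type*} [Field E]

lemma exists_relation {ι : Type*} [Fintype ι] (v : ι → E[X]) (n : ℕ) (hv : ∀ i, (v i).natDegree < n)
    (hcard : n < Fintype.card ι) : ∃ c : ι → E, c ≠ 0 ∧ ∑ i, C (c i) * v i = 0 := by
  let M : Matrix (Fin n) ι E := Matrix.of fun t i => (v i).coeff t
  have h1 : LinearMap.ker M.mulVecLin ≠ ⊥ := by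
    apply LinearMap.ker_ne_bot_of_finrank_lt
    simpa using hcard
  obtain ⟨c, hc, hc0⟩ := (Submodule.ne_bot_iff _).1 h1
  refine ⟨c, hc0, ?_⟩
  ext t
  simp only [finsetSum_coeff, coeff_C_mul, coeff_zero]
  by_cases ht : t < n
  · have h2 := congrFun (LinearMap.mem_ker.1 hc) ⟨t, ht⟩
    simp only [Matrix.mulVecLin_apply, Matrix.mulVec, dotProduct, M, Matrix.of_apply, Pi.zero_apply] at h2
    rw [← h2]
    exact Finset.sum_congr rfl (fun i _ => mul_comm _ _)
  · apply Finset.sum_eq_zero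
    intro i _
    rw [coeff_eq_zero_of_natDegree_lt (lt_of_lt_of_le (hv i) (by omega)), mul_zero]

lemma stepanov_core [Fintype E] [DecidableEq E] (p μ P : ℕ) [Fact p.Prime] [CharP E p] (hP : P = p ^ μ)
    (hcard : Fintype.card E = P ^ 2) (d e : ℕ) (hde : P = d * e + 1) (hd : 0 < d) (he : 0 < e)
    (h : E[X]) (hnd : ND d h) (hh : h ≠ 0) (α J : ℕ) (hα : h.natDegree ≤ α) (hαP : 2 * d * α < P)
    (hJ : P * α + d * e * h.natDegree + J < d * J * (α + 1)) (a : E) (ha : a ≠ 0) :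
    (Finset.univ.filter (fun x : E => (h.eval x) ^ (e * (P + 1)) = a)).card ≤
      α + d * e * h.natDegree + J * P := by
  set σ := iterateFrobenius E p μ with hσ
  have hσP : ∀ x, σ x = x ^ P := by intro x; rw [hσ, iterateFrobenius_def, hP]
  have hσσ : ∀ x, σ (σ x) = x := by
    intro x; rw [hσP, hσP, ← pow_mul, ← sq, ← hcard, FiniteField.pow_card]
  have hxPP : ∀ x : E, (x ^ P) ^ P = x := by intro x; rw [← hσP, ← hσP, hσσ]
  let v : Fin d × Fin J × Fin (α + 1) → E[X] := fun t =>
    X ^ (P * t.2.2) * C (a ^ (t.1 : ℕ)) * h ^ (e * (d - t.1)) * X ^ (t.2.1 : ℕ)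
  obtain ⟨c, hc0, hc⟩ := exists_relation v (P * α + d * e * h.natDegree + J) (by
    intro t
    have h1 : (v t).natDegree ≤ P * t.2.2 + 0 + e * (d - t.1) * h.natDegree + t.2.1 := by
      refine natDegree_mul_le_of_le (natDegree_mul_le_of_le (natDegree_mul_le_of_le ?_ ?_) ?_) ?_
      · simp
      · rw [natDegree_C]
      · exact natDegree_pow_le
      · simp
    have h2 : P * (t.2.2 : ℕ) ≤ P * α := Nat.mul_le_mul_left _ (by omega)
    have h3 : e * (d - t.1) * h.natDegree ≤ d * e * h.natDegree := by
      apply Nat.mul_le_mul_right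
      rw [mul_comm]
      apply Nat.mul_le_mul_right; omega
    have h4 := t.2.1.2
    omega) (by simpa [mul_assoc] using hJ)
  let Akj : ℕ → ℕ → E[X] := fun k j => if hk : k < d then if hj : j < J then
      ∑ i : Fin (α + 1), C (σ (c (⟨k, hk⟩, ⟨j, hj⟩, i))) * X ^ (i : ℕ) else 0 else 0
  let A : ℕ → E[X][X] := fun k => ∑ j ∈ Finset.range J, (Akj k j).map C * C (X ^ j)
  set u := h ^ e with hu
  set B : E[X] := ∑ k ∈ Finset.range d, ev E P (A k) * u ^ k with hB
  have hAkjd : ∀ k j, (Akj k j).natDegree ≤ α := by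
    intro k j
    simp only [Akj]
    split_ifs
    · refine natDegree_sum_le_of_forall_le _ _ ?_
      intro i _
      refine (natDegree_C_mul_X_pow_le _ _).trans (by omega)
    · simp
    · simp
  have hAd : ∀ k, (A k).natDegree ≤ α := by
    intro k
    refine natDegree_sum_le_of_forall_le _ _ ?_
    intro j _
    refine (natDegree_mul_C_le _ _).trans ?_
    rw [natDegree_map_eq_of_injective C_injective]
    exact hAkjd k j
  have hevA : ∀ k, ev E P (A k) = ∑ j ∈ Finset.range J, Akj k j * X ^ (P * j) := by
    intro k
    simp only [A, map_sum, map_mul]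
    apply Finset.sum_congr rfl
    intro j _
    have h4 : ev E P ((Akj k j).map C) = Akj k j := by
      simp only [ev, coe_eval₂RingHom, eval₂_map]
      have : ((expand E P : E[X] →+* E[X]).comp C) = C := by ext; simp
      rw [this, eval₂_C_X]
    have h5 : ev E P (C (X ^ j)) = X ^ (P * j) := by
      simp only [ev, coe_eval₂RingHom, eval₂_C]
      simp [pow_mul]
    rw [h4, h5]
  have hB0 : B ≠ 0 := by
    obtain ⟨⟨k, j, i⟩, hkji⟩ := Function.ne_iff.1 hc0
    refine nonvanish d P α h (h.map σ) u hnd hh ?_ ?_ A hAd hα hαP k k.2 ?_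
    · rwa [Ne, Polynomial.map_eq_zero_iff σ.injective]
    · have h1 := map_iterateFrobenius_expand p h μ
      rw [hu, ← pow_mul, ← pow_succ', mul_comm e d, ← hde]
      rw [map_expand, ← hP] at h1
      exact h1.symm
    · intro hA0
      have h2 := congrArg (fun f => (f.coeff i).coeff j) hA0
      simp only [A, finsetSum_coeff, coeff_mul_C, coeff_map, coeff_C_mul, coeff_X_pow, coeff_zero] at h2
      rw [Finset.sum_eq_single (j : ℕ)] at h2
      · simp only [if_true, mul_one, Akj, Fin.is_lt, dif_pos, finsetSum_coeff, coeff_C_mul, coeff_X_pow] at h2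
        rw [Finset.sum_eq_single i] at h2
        · simp only [if_true, mul_one, Fin.eta] at h2
          apply hkji
          simpa using h2
        · intro b _ hb
          rw [if_neg, mul_zero]
          intro h3; exact hb (Fin.ext h3.symm)
        · simp
      · intro b _ hb
        rw [if_neg (Ne.symm hb), mul_zero]
      · intro hj; exact absurd (Finset.mem_range.2 j.2) hj
  have hBdeg : B.natDegree ≤ α + d * e * h.natDegree + J * P := by
    refine natDegree_sum_le_of_forall_le _ _ ?_
    intro k hk
    rw [Finset.mem_range] at hk
    rw [hevA, Finset.sum_mul]
    refine natDegree_sum_le_of_forall_le _ _ ?_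
    intro j hj
    rw [Finset.mem_range] at hj
    have h1 : (Akj k j * X ^ (P * j) * u ^ k).natDegree ≤ α + P * j + k * (e * h.natDegree) := by
      refine natDegree_mul_le_of_le (natDegree_mul_le_of_le (hAkjd _ _) (by simp)) ?_
      refine natDegree_pow_le_of_le _ ?_
      exact natDegree_pow_le
    have h2 : P * j ≤ J * P := by rw [mul_comm]; exact Nat.mul_le_mul_right _ hj.le
    have h3 : k * (e * h.natDegree) ≤ d * e * h.natDegree := by
      rw [mul_assoc]; exact Nat.mul_le_mul_right _ hk.le
    omega
  refine le_trans ?_ hBdeg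
  apply card_le_degree_of_subset_roots
  intro x hx
  have hx' : (h.eval x) ^ (e * (P + 1)) = a := by simpa using hx
  rw [mem_roots hB0, IsRoot.def]
  set y := h.eval x with hy
  have hPpos : P ≠ 0 := by omega
  have hy0 : y ≠ 0 := by
    intro h0; rw [h0, zero_pow (by positivity)] at hx'; exact ha hx'.symm
  have hBx : B.eval x = ∑ t : Fin d × Fin J × Fin (α + 1), σ (c t) * x ^ (t.2.2 : ℕ) * x ^ (P * t.2.1) * y ^ (e * t.1) := by
    rw [Fintype.sum_prod_type]
    rw [hB, eval_finsetSum, Finset.sum_range]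
    apply Finset.sum_congr rfl
    intro k _
    rw [Fintype.sum_prod_type, hevA, Finset.sum_mul, eval_finsetSum, Finset.sum_range]
    apply Finset.sum_congr rfl
    intro j _
    simp only [Akj, Fin.is_lt, dif_pos, Fin.eta, eval_mul, eval_pow, eval_X, eval_finsetSum, eval_C, hu, ← hy,
      Finset.sum_mul, ← pow_mul]
  have hzero : σ (B.eval x) * y ^ (d * e) = 0 := by
    have h1 := congrArg (eval x) hc
    rw [eval_finsetSum, eval_zero] at h1
    rw [← h1, hBx, map_sum, Finset.sum_mul]
    apply Finset.sum_congr rfl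
    intro t _
    simp only [v, map_mul, hσσ, eval_mul, eval_C, eval_pow, eval_X, ← hy, map_pow]
    rw [hσP x, hσP y, pow_mul (x ^ P) P, hxPP, ← hx']
    have h2 : (y ^ P) ^ (e * (t.1 : ℕ)) * y ^ (d * e) = (y ^ (e * (P + 1))) ^ (t.1 : ℕ) * y ^ (e * (d - t.1)) := by
      rw [← pow_mul, ← pow_mul, ← pow_add, ← pow_add]
      congr 1
      have := t.1.2
      obtain ⟨r, hr⟩ := Nat.exists_eq_add_of_lt this
      have h4 : d - (t.1 : ℕ) = r + 1 := by omega
      rw [h4]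
      have h5 : d * e = (t.1 + r + 1) * e := by rw [← hr]
      rw [h5]
      ring
    rw [pow_mul x P]
    linear_combination (c t * (x ^ P) ^ (t.2.2 : ℕ) * x ^ (t.2.1 : ℕ)) * h2
  rcases mul_eq_zero.1 hzero with h1 | h1
  · exact (map_eq_zero_iff σ σ.injective).1 h1
  · exact absurd h1 (pow_ne_zero _ hy0)

lemma stepanov [Fintype E] [DecidableEq E] (p μ P : ℕ) [Fact p.Prime] [CharP E p] (hP : P = p ^ μ)
    (hcard : Fintype.card E = P ^ 2) (d e : ℕ) (hde : P = d * e + 1) (hd : 0 < d)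
    (h : E[X]) (hnd : ND d h) (hh : h ≠ 0) (a : E) (ha : a ≠ 0) :
    d * (Finset.univ.filter (fun x : E => (h.eval x) ^ (e * (P + 1)) = a)).card ≤
      P ^ 2 + d * (2 * d * h.natDegree + 3 * h.natDegree + 5) * P := by
  have he : 0 < e := by
    rcases Nat.eq_zero_or_pos e with rfl | h1
    · exfalso
      have : Fintype.card E = 1 := by rw [hcard, hde]; simp
      have := Fintype.one_lt_card (α := E)
      omega
    · exact h1
  set m := h.natDegree with hm
  by_cases hbig : 2 * d * m + 2 * m + 4 < P
  · set α := (P - 1) / (2 * d) with hα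
    have h1 : 2 * d * α ≤ P - 1 := Nat.mul_div_le _ _
    have h2 : P - 1 < 2 * d * (α + 1) := by
      rw [mul_comm]; exact Nat.lt_mul_of_div_lt (by omega) (by omega)
    have hmα : m ≤ α := by
      rw [hα, Nat.le_div_iff_mul_le (by omega)]
      have h5 : m * (2 * d) = 2 * d * m := by ring
      omega
    have hαP : α + 1 ≤ P := by
      have : α ≤ P - 1 := Nat.div_le_self _ _
      omega
    have heP : e + 1 ≤ P := by nlinarith
    have key : P * α + d * e * m + (e + (2 * m + 4)) < d * (e + (2 * m + 4)) * (α + 1) := by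
      have h3 : P ≤ 2 * d * (α + 1) := by omega
      have h4 : (m + 2) * P ≤ (m + 2) * (2 * d * (α + 1)) := Nat.mul_le_mul_left _ h3
      have h5 : d * (e + (2 * m + 4)) * (α + 1) = d * e * (α + 1) + (m + 2) * (2 * d * (α + 1)) := by ring
      have h6 : d * e * (α + 1) + (α + 1) = P * α + P := by rw [hde]; ring
      have h7 : d * e * m + m = P * m := by rw [hde]; ring
      have h8 : (m + 2) * P = P * m + 2 * P := by ring
      omega
    have := stepanov_core p μ P hP hcard d e hde hd he h hnd hh α (e + (2 * m + 4)) hmα (by omega) key a ha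
    refine (Nat.mul_le_mul_left d this).trans ?_
    have h9 : d * e * P + P = P ^ 2 := by conv_rhs => rw [sq]; rw [hde]; 
                                          rw [hde]; ring
    have h10 : d * e * m + m = P * m := by rw [hde]; ring
    have h11 : d * (α + d * e * m + (e + (2 * m + 4)) * P) = d * (α + d * e * m) + d * e * P + d * ((2 * m + 4) * P) := by ring
    have h12 : d * (α + d * e * m) ≤ d * (P + P * m) := Nat.mul_le_mul_left _ (by omega)
    have h13 : d * (2 * d * m + 3 * m + 5) * P = d * (P + P * m) + d * ((2 * m + 4) * P) + d * (2 * d * m) * P := by ring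
    rw [h11, h13]
    omega
  · have h1 : (Finset.univ.filter (fun x : E => (h.eval x) ^ (e * (P + 1)) = a)).card ≤ P ^ 2 := by
      rw [← hcard]; exact Finset.card_le_univ _
    refine (Nat.mul_le_mul_left d h1).trans ?_
    have h2 : P ≤ 2 * d * m + 3 * m + 5 := by omega
    have h3 : d * P * P ≤ d * (2 * d * m + 3 * m + 5) * P :=
      Nat.mul_le_mul_right _ (Nat.mul_le_mul_left _ h2)
    have : d * P ^ 2 = d * P * P := by ring
    omega

lemma stepanov_sum [Fintype E] (p μ P : ℕ) [Fact p.Prime] [CharP E p] (hP : P = p ^ μ)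
    (hcard : Fintype.card E = P ^ 2) (d e : ℕ) (hde : P = d * e + 1) (hd : 0 < d)
    (h : E[X]) (hnd : ND d h) (hh : h ≠ 0) (Θ : E → ℂ) (hΘ0 : Θ 0 = 0) (hΘ : ∀ a, ‖Θ a‖ ≤ 1)
    (S : Finset E) (hS : ∀ a, a ∈ S ↔ a ^ d = 1) (hsum : ∑ a ∈ S, Θ a = 0) :
    ‖∑ x : E, Θ ((h.eval x) ^ (e * (P + 1)))‖ ≤
      (d * (2 * d * h.natDegree + 3 * h.natDegree + 5) + h.natDegree : ℕ) * (P : ℝ) := by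
  classical
  set K := 2 * d * h.natDegree + 3 * h.natDegree + 5 with hK
  set N : E → ℕ := fun a => (Finset.univ.filter (fun x : E => (h.eval x) ^ (e * (P + 1)) = a)).card with hN
  have hPpos : 0 < P := by omega
  have hexp : e * (P + 1) * d = Fintype.card E - 1 := by
    rw [hcard, hde]
    have : (d * e + 1) ^ 2 = e * (d * e + 1 + 1) * d + 1 := by ring
    omega
  have he : e * (P + 1) ≠ 0 := by
    intro h0
    have := Fintype.one_lt_card (α := E)
    rw [h0] at hexp; omega
  have hmaps : ∀ x : E, h.eval x ≠ 0 → (h.eval x) ^ (e * (P + 1)) ∈ S := by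
    intro x hx
    rw [hS, ← pow_mul, hexp, FiniteField.pow_card_sub_one_eq_one _ hx]
  have hS0 : ∀ a ∈ S, a ≠ 0 := by
    rintro a ha rfl
    rw [hS, zero_pow (by omega)] at ha
    exact zero_ne_one ha
  have hScard : S.card ≤ d := by
    have : S.val ⊆ (nthRoots d (1:E)) := by
      intro a ha
      rw [mem_nthRoots hd]; exact (hS a).1 ha
    exact (Multiset.card_le_card ((Multiset.le_iff_subset S.nodup).2 this)).trans (card_nthRoots _ _)
  have h1 : ∑ x : E, Θ ((h.eval x) ^ (e * (P + 1))) = ∑ a ∈ S, (N a : ℂ) * Θ a := by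
    rw [← Finset.sum_filter_add_sum_filter_not Finset.univ (fun x : E => h.eval x ≠ 0)]
    have h2 : ∑ x ∈ Finset.univ.filter (fun x : E => ¬ h.eval x ≠ 0), Θ ((h.eval x) ^ (e * (P + 1))) = 0 := by
      apply Finset.sum_eq_zero
      intro x hx
      have : h.eval x = 0 := by simpa using hx
      rw [this, zero_pow he, hΘ0]
    rw [h2, add_zero]
    rw [← Finset.sum_fiberwise_of_maps_to (t := S) (g := fun x : E => (h.eval x) ^ (e * (P + 1)))
      (fun x hx => hmaps x (by simpa using hx))]
    apply Finset.sum_congr rfl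
    intro a ha
    rw [Finset.filter_filter]
    rw [Finset.sum_congr rfl (g := fun _ => Θ a) (by
      intro x hx
      simp only [Finset.mem_filter, Finset.mem_univ, true_and] at hx
      rw [hx.2])]
    rw [Finset.sum_const, nsmul_eq_mul]
    congr 3
    ext x
    simp only [Finset.mem_filter, Finset.mem_univ, true_and, and_iff_right_iff_imp]
    intro hx h0
    rw [h0, zero_pow he] at hx
    exact hS0 a ha hx.symm
  have h2 : ∑ a ∈ S, N a + h.natDegree ≥ P ^ 2 := by
    have h3 : ∑ a ∈ S, N a = (Finset.univ.filter (fun x : E => h.eval x ≠ 0)).card := by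
      rw [Finset.card_eq_sum_card_fiberwise (t := S) (f := fun x : E => (h.eval x) ^ (e * (P + 1)))
        (fun x hx => hmaps x (by simpa using hx))]
      apply Finset.sum_congr rfl
      intro a ha
      rw [Finset.filter_filter]
      simp only [hN]
      congr 1
      ext x
      simp only [Finset.mem_filter, Finset.mem_univ, true_and]
      constructor
      · intro hx
        refine ⟨?_, hx⟩
        intro h0
        rw [h0, zero_pow he] at hx
        exact hS0 a ha hx.symm
      · exact fun hx => hx.2
    have h4 : (Finset.univ.filter (fun x : E => ¬ h.eval x ≠ 0)).card ≤ h.natDegree := by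
      apply card_le_degree_of_subset_roots
      intro x hx
      rw [mem_roots hh]
      simpa using hx
    have h5 := Finset.card_filter_add_card_filter_not (s := (Finset.univ : Finset E)) (fun x : E => h.eval x ≠ 0)
    rw [Finset.card_univ, hcard] at h5
    omega
  have h3 : ∀ a ∈ S, (N a : ℝ) ≤ (P:ℝ) ^ 2 / d + K * P := by
    intro a ha
    have h4 := stepanov p μ P hP hcard d e hde hd h hnd hh a (hS0 a ha)
    have h5 : (d : ℝ) * N a ≤ P ^ 2 + d * K * P := by exact_mod_cast h4
    have hd' : (0:ℝ) < d := by exact_mod_cast hd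
    rw [← mul_le_mul_iff_right₀ hd']
    refine h5.trans (le_of_eq ?_)
    field_simp
  set W : ℝ := (P:ℝ) ^ 2 / d + K * P with hW
  have h4 : ∑ a ∈ S, (N a : ℂ) * Θ a = ∑ a ∈ S, ((N a : ℂ) - W) * Θ a := by
    simp only [sub_mul, Finset.sum_sub_distrib]
    rw [← Finset.mul_sum _ _ (W : ℂ), hsum, mul_zero, sub_zero]
  have hW0 : 0 ≤ W := by positivity
  rw [h1, h4]
  calc ‖∑ a ∈ S, ((N a : ℂ) - W) * Θ a‖ ≤ ∑ a ∈ S, ‖((N a : ℂ) - W) * Θ a‖ := norm_sum_le _ _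
    _ ≤ ∑ a ∈ S, (W - N a) := by
        apply Finset.sum_le_sum
        intro a ha
        rw [norm_mul]
        have h5 : ‖((N a : ℂ) - W)‖ = W - N a := by
          have : ((N a : ℂ) - W) = (((N a : ℝ) - W : ℝ) : ℂ) := by push_cast; rfl
          rw [this, Complex.norm_real, Real.norm_eq_abs, abs_of_nonpos (by linarith [h3 a ha])]; ring
        rw [h5]
        exact mul_le_of_le_one_right (by linarith [h3 a ha]) (hΘ a)
    _ = S.card * W - ∑ a ∈ S, (N a : ℝ) := by rw [Finset.sum_sub_distrib, Finset.sum_const, nsmul_eq_mul]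
    _ ≤ d * W - (P ^ 2 - h.natDegree) := by
        have h5 : (S.card : ℝ) * W ≤ d * W := mul_le_mul_of_nonneg_right (by exact_mod_cast hScard) hW0
        have h6 : (P:ℝ) ^ 2 ≤ ∑ a ∈ S, (N a : ℝ) + h.natDegree := by exact_mod_cast h2
        linarith
    _ = d * K * P + h.natDegree := by
        have hd' : (d:ℝ) ≠ 0 := by positivity
        rw [hW]; field_simp; ring
    _ ≤ _ := by
        have h7 : (1:ℝ) ≤ P := by exact_mod_cast hPpos
        have h8 : (0:ℝ) ≤ h.natDegree := by positivity
        push_cast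
        nlinarith

end Stepanov
end Weil16


namespace Weil16
open Polynomial

section CharSum

lemma cyclic_pow {G : Type*} [CommGroup G] [Finite G] [IsCyclic G] (d r : ℕ) (hG : Nat.card G = d * r)
    (a : G) (ha : a ^ d = 1) : ∃ y : G, y ^ r = a := by
  obtain ⟨g, hg⟩ := IsCyclic.exists_generator (α := G)
  obtain ⟨t, rfl⟩ := Subgroup.mem_zpowers_iff.mp (hg a)
  have ho : orderOf g = d * r := by rw [← hG]; exact orderOf_eq_card_of_forall_mem_zpowers hg
  have hpos : 0 < d * r := by rw [← hG]; exact Nat.card_pos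
  have hd : 0 < d := Nat.pos_of_mul_pos_right hpos
  rw [← zpow_natCast, ← zpow_mul] at ha
  have h1 := orderOf_dvd_iff_zpow_eq_one.mpr ha
  rw [ho] at h1
  push_cast at h1
  rw [mul_comm t] at h1
  have h2 : (r : ℤ) ∣ t := Int.dvd_of_mul_dvd_mul_left (by exact_mod_cast hd.ne') h1
  obtain ⟨u, rfl⟩ := h2
  exact ⟨g ^ u, by rw [← zpow_natCast, ← zpow_mul, mul_comm]⟩

variable {F : Type*} [Field F] [Fintype F] {L : Type*} [Field L] [Fintype L] [Algebra F L]

lemma norm_mulchar_le {F : Type*} [Field F] [Finite F] (χ : MulChar F ℂ) (a : F) : ‖χ a‖ ≤ 1 := by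
  by_cases ha : a = 0
  · subst ha; simp [MulChar.map_zero]
  · have : Fintype F := Fintype.ofFinite F
    have h : (χ a) ^ (Fintype.card F - 1) = 1 := by
      rw [← map_pow, FiniteField.pow_card_sub_one_eq_one a ha, map_one]
    have hc : Fintype.card F - 1 ≠ 0 := by have := Fintype.one_lt_card (α := F); omega
    exact (Complex.norm_eq_one_of_pow_eq_one h hc).le

lemma mulchar_sum_bound (P m : ℕ) (hm : 0 < m) (hP : P = Fintype.card F ^ m)
    (hcard : Fintype.card L = P ^ 2)
    (χ : MulChar F ℂ) (hχ : χ ≠ 1) (h : L[X]) (hnd : ND (orderOf χ) h) (hh : h ≠ 0) :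
    ‖∑ x : L, χ (Algebra.norm F (h.eval x))‖ ≤
      (orderOf χ * (2 * orderOf χ * h.natDegree + 3 * h.natDegree + 5) + h.natDegree : ℕ) * (P : ℝ) := by
  classical
  obtain ⟨p, hp⟩ := CharP.exists F
  have hpp : Fact p.Prime := ⟨CharP.char_is_prime F p⟩
  have hpL : CharP L p := charP_of_injective_algebraMap (algebraMap F L).injective p
  obtain ⟨ν, _, hν⟩ := FiniteField.card F p
  set d := orderOf χ with hd
  have hfin : IsOfFinOrder χ := isOfFinOrder_of_finite χ
  have hd0 : 0 < d := orderOf_pos_iff.mpr hfin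
  have hF1 : 1 < Fintype.card F := Fintype.one_lt_card
  have hdF : d ∣ Fintype.card F - 1 := by
    apply orderOf_dvd_of_pow_eq_one
    ext a
    rw [MulChar.pow_apply_coe, ← map_pow, MulChar.one_apply_coe]
    have := FiniteField.pow_card_sub_one_eq_one (a : F) a.ne_zero
    rw [this, map_one]
  have hdP : d ∣ P - 1 := by
    refine hdF.trans ?_
    rw [hP]
    simpa using Nat.sub_dvd_pow_sub_pow (Fintype.card F) 1 m
  obtain ⟨e, he⟩ := hdP
  have hP1 : 1 ≤ P := by rw [hP]; exact Nat.one_le_pow _ _ (by omega)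
  have hde : P = d * e + 1 := by omega
  have hunits : Nat.card Lˣ = d * (e * (P + 1)) := by
    rw [Nat.card_eq_fintype_card, Fintype.card_units, hcard]
    have : P ^ 2 = d * (e * (P + 1)) + 1 := by
      have : d * (e * (P + 1)) = (d * e) * (P + 1) := by ring
      rw [this, ← he]
      obtain ⟨t, rfl⟩ := Nat.exists_eq_add_of_le hP1
      simp; ring
    omega
  set r := e * (P + 1) with hr
  have hr0 : r ≠ 0 := by
    intro h0
    have : 0 < Nat.card Lˣ := Nat.card_pos
    rw [hunits, h0] at this
    simp at this
  have hdef : ∀ y y' : L, y ^ r = y' ^ r → χ (Algebra.norm F y) = χ (Algebra.norm F y') := by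
    intro y y' hyy
    by_cases hy : y = 0
    · subst hy
      rw [zero_pow hr0] at hyy
      rw [(pow_eq_zero_iff hr0).mp hyy.symm]
    · have hy' : y' ≠ 0 := by
        rintro rfl
        rw [zero_pow hr0] at hyy
        exact hy ((pow_eq_zero_iff hr0).mp hyy)
      obtain ⟨w, hw⟩ := cyclic_pow (G := Lˣ) r d (by rw [hunits, mul_comm])
        (Units.mk0 y hy / Units.mk0 y' hy') (by
          ext; push_cast; simp only [Units.val_mk0]
          rw [div_pow, hyy, div_self (pow_ne_zero _ hy')])
      have hw' : y = y' * (w : L) ^ d := by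
        have := congrArg (Units.val) hw
        push_cast at this
        simp only [Units.val_mk0] at this
        rw [this]; field_simp
      rw [hw', map_mul, map_pow, map_mul, map_pow]
      have : χ (Algebra.norm F (w : L)) ^ d = 1 := by
        have hn : Algebra.norm F (w : L) ≠ 0 := Algebra.norm_ne_zero_iff.mpr w.ne_zero
        rw [← Units.val_mk0 hn, ← MulChar.pow_apply_coe, hd, pow_orderOf_eq_one, MulChar.one_apply_coe]
      rw [this, mul_one]
  let Θ : L → ℂ := fun a => if hy : ∃ y : L, y ^ r = a then χ (Algebra.norm F hy.choose) else 0
  have hΘ : ∀ y : L, Θ (y ^ r) = χ (Algebra.norm F y) := by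
    intro y
    have hy : ∃ y' : L, y' ^ r = y ^ r := ⟨y, rfl⟩
    simp only [Θ, dif_pos hy]
    exact hdef _ _ hy.choose_spec
  have hΘ0 : Θ 0 = 0 := by
    have := hΘ 0
    rw [zero_pow hr0] at this
    rw [this, Algebra.norm_zero, MulChar.map_zero]
  have hΘ1 : ∀ a, ‖Θ a‖ ≤ 1 := by
    intro a
    simp only [Θ]
    split_ifs
    · exact norm_mulchar_le χ _
    · simp
  have hne1 : ∃ b : L, b ≠ 0 ∧ χ (Algebra.norm F b) ≠ 1 := by
    obtain ⟨a, ha⟩ := MulChar.ne_one_iff.mp hχ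
    obtain ⟨b, hb⟩ := FiniteField.norm_surjective F L (a : F)
    refine ⟨b, ?_, by rw [hb]; exact ha⟩
    rintro rfl
    rw [Algebra.norm_zero] at hb
    exact a.ne_zero hb.symm
  obtain ⟨b, hb0, hb1⟩ := hne1
  set S : Finset L := Finset.univ.filter fun a => a ^ d = 1 with hS
  have hbd : (b ^ r) ^ d = 1 := by
    rw [← pow_mul, mul_comm, ← hunits]
    have : (Units.mk0 b hb0) ^ Nat.card Lˣ = 1 := pow_card_eq_one'
    have := congrArg Units.val this
    rw [Units.val_pow_eq_pow_val, Units.val_mk0, Units.val_one] at this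
    exact this
  have hsurj : ∀ a ∈ S, ∃ y : L, y ^ r = a := by
    intro a ha
    simp only [S, Finset.mem_filter, Finset.mem_univ, true_and] at ha
    have ha0 : a ≠ 0 := by
      rintro rfl
      rw [zero_pow hd0.ne'] at ha
      exact zero_ne_one ha
    obtain ⟨y, hy⟩ := cyclic_pow (G := Lˣ) d r hunits (Units.mk0 a ha0) (by ext; simpa using ha)
    exact ⟨y, by simpa using congrArg Units.val hy⟩
  have hsum : ∑ a ∈ S, Θ a = 0 := by
    have h1 : ∑ a ∈ S, Θ (b ^ r * a) = ∑ a ∈ S, Θ a := by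
      apply Finset.sum_bijective (fun a => b ^ r * a)
      · exact mulLeft_bijective₀ _ (pow_ne_zero _ hb0)
      · intro a
        simp only [S, Finset.mem_filter, Finset.mem_univ, true_and, mul_pow, hbd, one_mul]
      · intros; rfl
    have h2 : ∑ a ∈ S, Θ (b ^ r * a) = χ (Algebra.norm F b) * ∑ a ∈ S, Θ a := by
      rw [Finset.mul_sum]
      refine Finset.sum_congr rfl fun a ha => ?_
      obtain ⟨y, rfl⟩ := hsurj a ha
      rw [← mul_pow, hΘ, hΘ, map_mul, map_mul]
    rw [h1] at h2
    have h3 : (1 - χ (Algebra.norm F b)) * ∑ a ∈ S, Θ a = 0 := by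
      rw [sub_mul, one_mul, ← h2, sub_self]
    rcases mul_eq_zero.mp h3 with h4 | h4
    · exact absurd (sub_eq_zero.mp h4).symm hb1
    · exact h4
  have hPp : P = p ^ ((ν : ℕ) * m) := by rw [hP, hν, pow_mul]
  have := stepanov_sum p (ν * m) P hPp hcard d e hde hd0 h hnd hh Θ hΘ0 hΘ1 S (by simp [S]) hsum
  simp only [← hr, hΘ] at this
  exact this

end CharSum
end Weil16


namespace Weil16
open Polynomial

section Ext
set_option linter.unusedSectionVars false

variable {F : Type*} [Field F] [Fintype F] {L : Type*} [Field L] [Fintype L] [Algebra F L]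

lemma mem_range_of_pow_card (u : L) (hu : u ^ Fintype.card F = u) : ∃ c : F, algebraMap F L c = u := by
  classical
  have hF1 : 1 < Fintype.card F := Fintype.one_lt_card
  have hne : (X ^ Fintype.card F - X : L[X]) ≠ 0 := FiniteField.X_pow_card_sub_X_ne_zero L hF1
  have hsub : Finset.univ.image (algebraMap F L) ⊆ (X ^ Fintype.card F - X : L[X]).roots.toFinset := by
    intro x hx
    obtain ⟨c, -, rfl⟩ := Finset.mem_image.mp hx
    rw [Multiset.mem_toFinset, mem_roots hne]
    simp [IsRoot, ← map_pow, FiniteField.pow_card]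
  have heq := Finset.eq_of_subset_of_card_le hsub (by
    rw [Finset.card_image_of_injective _ (algebraMap F L).injective, Finset.card_univ]
    refine (Multiset.toFinset_card_le _).trans ((card_roots' _).trans ?_)
    rw [FiniteField.X_pow_card_sub_X_natDegree_eq L hF1])
  have : u ∈ (X ^ Fintype.card F - X : L[X]).roots.toFinset := by
    rw [Multiset.mem_toFinset, mem_roots hne]
    simp [IsRoot, hu]
  rw [← heq] at this
  obtain ⟨c, -, h⟩ := Finset.mem_image.mp this
  exact ⟨c, h⟩

variable (F) in
noncomputable def artin (L : Type*) [Field L] [Fintype L] [Algebra F L] : L →ₗ[F] L :=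
  (FiniteField.frobeniusAlgHom F L).toLinearMap - LinearMap.id

lemma artin_apply (z : L) : artin F L z = z ^ Fintype.card F - z := rfl

lemma ker_artin : LinearMap.ker (artin F L) = F ∙ (1 : L) := by
  ext u
  rw [LinearMap.mem_ker, artin_apply, sub_eq_zero, Submodule.mem_span_singleton]
  constructor
  · intro h
    obtain ⟨c, hc⟩ := mem_range_of_pow_card (F := F) u h
    exact ⟨c, by rw [← hc, Algebra.algebraMap_eq_smul_one]⟩
  · rintro ⟨c, rfl⟩
    rw [← Algebra.algebraMap_eq_smul_one, ← map_pow, FiniteField.pow_card]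

lemma range_artin : LinearMap.range (artin F L) = LinearMap.ker (Algebra.trace F L) := by
  have hle : LinearMap.range (artin F L) ≤ LinearMap.ker (Algebra.trace F L) := by
    rintro _ ⟨z, rfl⟩
    rw [LinearMap.mem_ker, artin_apply, map_sub, sub_eq_zero]
    have := Algebra.trace_eq_of_algEquiv (FiniteField.frobeniusAlgEquivOfAlgebraic F L) z
    simpa using this
  apply Submodule.eq_of_le_of_finrank_eq hle
  have h1 := LinearMap.finrank_range_add_finrank_ker (artin F L)
  have h2 := LinearMap.finrank_range_add_finrank_ker (Algebra.trace F L)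
  rw [ker_artin, finrank_span_singleton one_ne_zero] at h1
  rw [LinearMap.range_eq_top.mpr (Algebra.trace_surjective F L), finrank_top, Module.finrank_self] at h2
  omega

lemma h90_sum [DecidableEq F] (G : L → ℂ) (γ : L) :
    ∑ z : L, G (z ^ Fintype.card F - z + γ) =
      Fintype.card F * ∑ x with Algebra.trace F L x = Algebra.trace F L γ, G x := by
  classical
  have h := Finset.sum_comp (s := (Finset.univ : Finset L)) G (fun z => z ^ Fintype.card F - z + γ)
  rw [h, Finset.mul_sum]
  have him : Finset.univ.image (fun z : L => z ^ Fintype.card F - z + γ)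
      = Finset.univ.filter fun x => Algebra.trace F L x = Algebra.trace F L γ := by
    ext x
    simp only [Finset.mem_image, Finset.mem_univ, true_and, Finset.mem_filter]
    rw [← sub_eq_zero, ← map_sub, ← LinearMap.mem_ker, ← range_artin, LinearMap.mem_range]
    simp only [artin_apply, eq_sub_iff_add_eq]
  rw [him]
  refine Finset.sum_congr rfl fun x hx => ?_
  rw [← him] at hx
  obtain ⟨z, -, rfl⟩ := Finset.mem_image.mp hx
  have : (Finset.univ.filter fun a : L => a ^ Fintype.card F - a + γ = z ^ Fintype.card F - z + γ)
      = Finset.univ.image (fun c : F => z + algebraMap F L c) := by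
    ext a
    simp only [Finset.mem_image, Finset.mem_univ, true_and, Finset.mem_filter, add_left_inj]
    rw [← artin_apply (F := F), ← artin_apply (F := F), ← sub_eq_zero, ← map_sub,
      ← LinearMap.mem_ker, ker_artin, Submodule.mem_span_singleton]
    simp only [Algebra.algebraMap_eq_smul_one, eq_sub_iff_add_eq, add_comm z]
  rw [this, Finset.card_image_of_injective _ (fun a b hab => (algebraMap F L).injective (add_left_cancel hab)),
    Finset.card_univ, nsmul_eq_mul]

lemma exact_pow {g v : L[X]} (hg : Squarefree g) (hu : ¬ IsUnit g) (hg0 : g ≠ 0) (hc : IsCoprime g v) (i : ℕ) :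
    ∃ π : L[X], Prime π ∧ π ^ i ∣ g ^ i * v ∧ ¬ π ^ (i + 1) ∣ g ^ i * v := by
  obtain ⟨π, hπ, w, rfl⟩ := WfDvdMonoid.exists_irreducible_factor hu hg0
  have hπp := hπ.prime
  refine ⟨π, hπp, ?_, ?_⟩
  · rw [mul_pow, mul_assoc]; exact dvd_mul_right _ _
  · rw [mul_pow, mul_assoc, pow_succ]
    intro h
    have h1 : π ∣ w ^ i * v := (mul_dvd_mul_iff_left (pow_ne_zero i hπp.ne_zero)).mp h
    rcases hπp.dvd_or_dvd h1 with h2 | h2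
    · have h3 := hπp.dvd_of_dvd_pow h2
      exact hπ.not_isUnit (hg π (mul_dvd_mul_left π h3))
    · exact hπ.not_isUnit (hc.isUnit_of_dvd' (dvd_mul_right _ _) h2)

noncomputable def hpol (q : ℕ) (γ : L) : L[X] := X ^ q - X + C γ

lemma natDegree_sq_add_one (u : L[X]) : (u ^ 2 + 1).natDegree = 2 * u.natDegree := by
  rw [← C_1, natDegree_add_C, natDegree_pow]

lemma natDegree_hpol (q : ℕ) (hq : 1 < q) (γ : L) : (hpol q γ).natDegree = q := by
  unfold hpol
  rw [natDegree_add_C, FiniteField.X_pow_card_sub_X_natDegree_eq L hq]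

lemma derivative_hpol (q : ℕ) (hq : (q : L) = 0) (γ : L) : derivative (hpol q γ) = -1 := by
  simp [hpol, derivative_X_pow, hq]

lemma nd_hpol (q : ℕ) (hq1 : 1 < q) (hq : (q : L) = 0) (γ : L) (d i j : ℕ)
    (hd2 : ringChar L = 2 → Nat.Coprime d 2)
    (hij : ∀ k, 0 < k → k < d → ¬ d ∣ k * i ∨ ¬ d ∣ k * j) :
    ND d (hpol q γ ^ i * ((hpol q γ) ^ 2 + 1) ^ j) := by
  set u := hpol q γ with hu
  have hder : derivative u = -1 := derivative_hpol q hq γ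
  have hdeg : u.natDegree = q := natDegree_hpol q hq1 γ
  have hu0 : u ≠ 0 := by intro h; rw [h] at hdeg; simp at hdeg; omega
  have huu : ¬ IsUnit u := by
    intro h; have := natDegree_eq_zero_of_isUnit h; omega
  have hcop : IsCoprime u (u ^ 2 + 1) := ⟨-u, 1, by ring⟩
  have husep : u.Separable := ⟨0, -1, by rw [hder]; ring⟩
  intro k hk hkd
  rcases hij k hk hkd with h | h
  · obtain ⟨π, h1, h2, h3⟩ := exact_pow husep.squarefree huu hu0 (hcop.pow_right (n := j)) i
    exact ⟨π, i, h1, h2, h3, h⟩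
  · by_cases hc : ringChar L = 2
    · have h2 : (2 : L) = 0 := by
        have := ringChar.Nat.cast_ringChar (R := L)
        rw [hc] at this; exact_mod_cast this
      have h2' : (2 : L[X]) = 0 := by
        have := congrArg (C : L → L[X]) h2
        rw [C_0] at this
        exact this
      have hsq : u ^ 2 + 1 = (u + 1) ^ 2 := by linear_combination (-u) * h2'
      have hdeg' : (u + 1).natDegree = q := by rw [← hdeg]; exact natDegree_add_C (a := 1)
      have hsep : (u + 1).Separable := ⟨0, -1, by simp [hder]⟩
      obtain ⟨π, h1, h2, h3⟩ := exact_pow hsep.squarefree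
        (by intro h; have := natDegree_eq_zero_of_isUnit h; omega)
        (by intro h; rw [h] at hdeg'; simp at hdeg'; omega)
        (show IsCoprime (u + 1) (u ^ i) from IsCoprime.pow_right ⟨1, -1, by ring⟩) (2 * j)
      refine ⟨π, 2 * j, h1, ?_, ?_, ?_⟩
      · rw [hsq, ← pow_mul, mul_comm (u ^ i)]; exact h2
      · rw [hsq, ← pow_mul, mul_comm (u ^ i)]; exact h3
      · intro hdv
        apply h
        have : k * (2 * j) = (k * j) * 2 := by ring
        rw [this] at hdv
        exact (hd2 hc).dvd_of_dvd_mul_right hdv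
    · have h2 : (2 : L) ≠ 0 := Ring.two_ne_zero hc
      have hdeg' : (u ^ 2 + 1).natDegree = 2 * q := by
        rw [← hdeg, ← natDegree_pow]; exact natDegree_add_C (a := 1)
      have hh : (2 : L[X]) * C (2⁻¹ : L) = 1 := by
        have : (2 : L[X]) = C 2 := rfl
        rw [this, ← C_mul, mul_inv_cancel₀ h2, C_1]
      have hsep : (u ^ 2 + 1).Separable := by
        refine ⟨1, C 2⁻¹ * u, ?_⟩
        simp only [derivative_add, derivative_pow, hder, derivative_one]
        push_cast
        have : (C (2:L)) = (2 : L[X]) := rfl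
        simp only [this]
        linear_combination (-u ^ 2) * hh
      obtain ⟨π, h1, h2, h3⟩ := exact_pow hsep.squarefree
        (by intro h; have := natDegree_eq_zero_of_isUnit h; omega)
        (by intro h; rw [h] at hdeg'; simp at hdeg'; omega)
        (hcop.symm.pow_right (n := i)) j
      exact ⟨π, j, h1, by rw [mul_comm]; exact h2, by rw [mul_comm]; exact h3, h⟩

lemma exists_gen (χ₁ χ₂ : MulChar F ℂ) : ∃ (χ : MulChar F ℂ) (i j : ℕ), 0 < i ∧ 0 < j ∧
    χ₁ = χ ^ i ∧ χ₂ = χ ^ j ∧ ∃ a b : ℤ, χ = χ₁ ^ a * χ₂ ^ b := by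
  classical
  have hcyc : IsCyclic (MulChar F ℂ) := by
    obtain ⟨e⟩ := MulChar.mulEquiv_units F ℂ
    exact isCyclic_of_surjective e.symm e.symm.surjective
  obtain ⟨⟨χ, hχ⟩, hgen⟩ := IsCyclic.exists_generator (α := Subgroup.closure {χ₁, χ₂})
  have key : ∀ η ∈ Subgroup.closure {χ₁, χ₂}, ∃ i : ℕ, 0 < i ∧ η = χ ^ i := by
    intro η hη
    obtain ⟨t, ht⟩ := Subgroup.mem_zpowers_iff.mp (hgen ⟨η, hη⟩)
    have ht' : χ ^ t = η := congrArg Subtype.val ht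
    have hpos : 0 < orderOf χ := orderOf_pos χ
    refine ⟨(t % orderOf χ).toNat + orderOf χ, by omega, ?_⟩
    rw [pow_add, pow_orderOf_eq_one, mul_one, ← zpow_natCast, Int.toNat_of_nonneg
      (Int.emod_nonneg _ (by exact_mod_cast hpos.ne')), zpow_mod_orderOf, ht']
  obtain ⟨i, hi, h1⟩ := key χ₁ (Subgroup.subset_closure (by simp))
  obtain ⟨j, hj, h2⟩ := key χ₂ (Subgroup.subset_closure (by simp))
  obtain ⟨a, b, hab⟩ := Subgroup.mem_closure_pair.mp hχ
  exact ⟨χ, i, j, hi, hj, h1, h2, a, b, hab.symm⟩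

/-- the mixed character sum -/
noncomputable def SS (χ₁ χ₂ : MulChar F ℂ) (ψ : AddChar F ℂ) (L : Type*) [Field L] [Fintype L]
    [Algebra F L] : ℂ :=
  ∑ x : L, χ₁ (Algebra.norm F x) * χ₂ (Algebra.norm F (x ^ 2 + 1)) * ψ (Algebra.trace F L x)

lemma ext_bound_mul (χ₁ χ₂ : MulChar F ℂ) (ψ : AddChar F ℂ) (hne : ¬ (χ₁ = 1 ∧ χ₂ = 1)) :
    ∃ K : ℝ, ∀ (L : Type) [Field L] [Fintype L] [Algebra F L] (m : ℕ), 0 < m →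
      Fintype.card L = (Fintype.card F ^ m) ^ 2 →
      ‖SS χ₁ χ₂ ψ L‖ ≤ K * (Fintype.card F : ℝ) ^ m := by
  classical
  obtain ⟨χ, i, j, hi, hj, h1, h2, a, b, hab⟩ := exists_gen χ₁ χ₂
  have hχ : χ ≠ 1 := by
    rintro rfl
    simp at h1 h2
    exact hne ⟨h1, h2⟩
  set q := Fintype.card F with hq
  have hq1 : 1 < q := Fintype.one_lt_card
  set d := orderOf χ with hd
  set D := q * (i + 2 * j) with hD
  refine ⟨((d * (2 * d * D + 3 * D + 5) + D : ℕ) : ℝ), ?_⟩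
  intro L _ _ _ m hm hcard
  have hdF : d ∣ q - 1 := by
    apply orderOf_dvd_of_pow_eq_one
    ext a
    rw [MulChar.pow_apply_coe, ← map_pow, MulChar.one_apply_coe]
    have := FiniteField.pow_card_sub_one_eq_one (a : F) a.ne_zero
    rw [this, map_one]
  have hqL : (q : L) = 0 := by
    have h0 : (q : F) = 0 := FiniteField.cast_card_eq_zero F
    have := congrArg (algebraMap F L) h0
    simpa using this
  have hd2 : ringChar L = 2 → Nat.Coprime d 2 := by
    intro h2
    have hqe : ((q : ℕ) : L) = 0 := hqL
    have : 2 ∣ q := by rw [← h2]; exact (ringChar.spec L q).mp hqe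
    have h3 : Nat.Coprime (q - 1) 2 := by
      rw [Nat.coprime_two_right, Nat.odd_iff]; omega
    exact Nat.Coprime.coprime_dvd_left hdF h3
  have hij : ∀ k, 0 < k → k < d → ¬ d ∣ k * i ∨ ¬ d ∣ k * j := by
    intro k hk hkd
    by_contra! hcon
    obtain ⟨hc1, hc2⟩ := hcon
    have e1 : χ₁ ^ k = 1 := by
      rw [h1, ← pow_mul, mul_comm]; exact orderOf_dvd_iff_pow_eq_one.mp hc1
    have e2 : χ₂ ^ k = 1 := by
      rw [h2, ← pow_mul, mul_comm]; exact orderOf_dvd_iff_pow_eq_one.mp hc2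
    have e3 : χ ^ k = 1 := by
      rw [hab, mul_pow, ← zpow_natCast, ← zpow_natCast, ← zpow_mul, ← zpow_mul, mul_comm a, mul_comm b,
        zpow_mul, zpow_mul, zpow_natCast, zpow_natCast, e1, e2]
      simp
    exact pow_ne_one_of_lt_orderOf hk.ne' hkd e3
  -- reformulate
  have hterm : ∀ x : L, χ₁ (Algebra.norm F x) * χ₂ (Algebra.norm F (x ^ 2 + 1))
      = χ (Algebra.norm F (x ^ i * (x ^ 2 + 1) ^ j)) := by
    intro x
    rw [map_mul, map_mul, map_pow, map_pow, map_pow, map_pow, h1, h2, MulChar.pow_apply' _ hi.ne',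
      MulChar.pow_apply' _ hj.ne']
  have hP0 : (0:ℝ) < (q : ℝ) := by positivity
  -- inner bound
  have hinner : ∀ c : F, ‖∑ x : L with Algebra.trace F L x = c,
      χ (Algebra.norm F (x ^ i * (x ^ 2 + 1) ^ j))‖ ≤
      ((d * (2 * d * D + 3 * D + 5) + D : ℕ) : ℝ) * (q : ℝ) ^ m / q := by
    intro c
    obtain ⟨γ, rfl⟩ := Algebra.trace_surjective F L c
    have hs := h90_sum (F := F) (fun x : L => χ (Algebra.norm F (x ^ i * (x ^ 2 + 1) ^ j))) γ
    have hu0 : hpol q γ ≠ 0 := by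
      intro h; have := natDegree_hpol q hq1 γ; rw [h] at this; simp at this; omega
    have hdeg2 : ((hpol q γ) ^ 2 + 1).natDegree = 2 * q := by
      rw [natDegree_sq_add_one, natDegree_hpol q hq1 γ]
    have hu1 : (hpol q γ) ^ 2 + 1 ≠ 0 := by
      intro h; rw [h] at hdeg2; simp at hdeg2; omega
    have hb := mulchar_sum_bound (F := F) (q ^ m) m hm rfl hcard χ hχ
      (hpol q γ ^ i * ((hpol q γ) ^ 2 + 1) ^ j) (nd_hpol q hq1 hqL γ d i j hd2 hij)
      (mul_ne_zero (pow_ne_zero _ hu0) (pow_ne_zero _ hu1))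
    have hdeg : (hpol q γ ^ i * ((hpol q γ) ^ 2 + 1) ^ j).natDegree = D := by
      rw [natDegree_mul (pow_ne_zero _ hu0) (pow_ne_zero _ hu1), natDegree_pow, natDegree_pow, hdeg2,
        natDegree_hpol q hq1]
      ring
    rw [hdeg] at hb
    have heval : ∀ x : L, (hpol q γ ^ i * ((hpol q γ) ^ 2 + 1) ^ j).eval x =
        (x ^ q - x + γ) ^ i * ((x ^ q - x + γ) ^ 2 + 1) ^ j := by
      intro x; simp [hpol]
    simp only [heval] at hb
    rw [hs, norm_mul, Complex.norm_natCast] at hb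
    rw [le_div_iff₀ hP0, mul_comm]
    push_cast at hb ⊢
    exact hb
  have hψ : ∀ c : F, ‖ψ c‖ ≤ 1 := fun c => (AddChar.norm_apply ψ c).le
  have hsplit : SS χ₁ χ₂ ψ L = ∑ c : F, ψ c * ∑ x : L with Algebra.trace F L x = c,
      χ (Algebra.norm F (x ^ i * (x ^ 2 + 1) ^ j)) := by
    unfold SS
    rw [← Finset.sum_fiberwise (s := Finset.univ) (g := fun x : L => Algebra.trace F L x)]
    refine Finset.sum_congr rfl fun c _ => ?_
    rw [Finset.mul_sum]
    refine Finset.sum_congr rfl fun x hx => ?_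
    rw [hterm, (Finset.mem_filter.mp hx).2, mul_comm]
  rw [hsplit]
  calc _ ≤ ∑ c : F, ‖ψ c * ∑ x : L with Algebra.trace F L x = c,
      χ (Algebra.norm F (x ^ i * (x ^ 2 + 1) ^ j))‖ := norm_sum_le _ _
    _ ≤ ∑ c : F, ((d * (2 * d * D + 3 * D + 5) + D : ℕ) : ℝ) * (q : ℝ) ^ m / q := by
      refine Finset.sum_le_sum fun c _ => ?_
      rw [norm_mul]
      exact (mul_le_of_le_one_left (norm_nonneg _) (hψ c)).trans (hinner c)
    _ = _ := by
      rw [Finset.sum_const, Finset.card_univ, nsmul_eq_mul, ← hq]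
      field_simp

lemma ext_bound_add (ψ : AddChar F ℂ) (hψ : ψ ≠ 1) :
    ∀ (L : Type) [Field L] [Fintype L] [Algebra F L], ‖SS (1 : MulChar F ℂ) 1 ψ L‖ ≤ 3 := by
  classical
  intro L _ _ _
  let Ψ : AddChar L ℂ := ψ.compAddMonoidHom (Algebra.trace F L).toAddMonoidHom
  have hΨ : Ψ ≠ 0 := by
    intro h
    apply hψ
    ext c
    obtain ⟨x, rfl⟩ := Algebra.trace_surjective F L c
    have := DFunLike.congr_fun h x
    simpa [Ψ] using this
  have h0 : ∑ x : L, Ψ x = 0 := AddChar.sum_eq_zero_iff_ne_zero.mpr hΨ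
  set g : L[X] := X * (X ^ 2 + 1) with hg
  have hg1 : (X ^ 2 + 1 : L[X]).natDegree = 2 := by
    rw [natDegree_sq_add_one, natDegree_X]
  have hg2 : (X ^ 2 + 1 : L[X]) ≠ 0 := by intro h; rw [h] at hg1; simp at hg1
  have hgd : g.natDegree = 3 := by
    rw [hg, natDegree_mul X_ne_zero hg2, natDegree_X, hg1]
  have hg0 : g ≠ 0 := by intro h; rw [h] at hgd; simp at hgd
  have hterm : ∀ x : L, (1 : MulChar F ℂ) (Algebra.norm F x) * (1 : MulChar F ℂ) (Algebra.norm F (x ^ 2 + 1)) *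
      ψ (Algebra.trace F L x) = Ψ x - if x ∈ g.roots.toFinset then Ψ x else 0 := by
    intro x
    have hmem : x ∈ g.roots.toFinset ↔ x = 0 ∨ x ^ 2 + 1 = 0 := by
      rw [Multiset.mem_toFinset, mem_roots hg0]; simp [IsRoot, hg]
    have hone : ∀ y : L, y ≠ 0 → (1 : MulChar F ℂ) (Algebra.norm F y) = 1 := by
      intro y hy
      exact MulChar.one_apply (Ne.isUnit (Algebra.norm_ne_zero_iff.mpr hy))
    by_cases hx : x = 0
    · rw [if_pos (hmem.mpr (Or.inl hx)), hx, Algebra.norm_zero, MulChar.map_zero]; simp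
    · by_cases hx2 : x ^ 2 + 1 = 0
      · rw [if_pos (hmem.mpr (Or.inr hx2)), hx2, Algebra.norm_zero, MulChar.map_zero]; simp
      · rw [if_neg (by rw [hmem]; tauto), hone x hx, hone _ hx2]
        simp [Ψ]
  unfold SS
  simp only [hterm]
  rw [Finset.sum_sub_distrib, h0, zero_sub, norm_neg, Finset.sum_ite_mem, Finset.univ_inter]
  refine (norm_sum_le _ _).trans ?_
  calc _ ≤ ∑ x ∈ g.roots.toFinset, (1 : ℝ) := Finset.sum_le_sum fun x _ => (AddChar.norm_apply Ψ x).le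
    _ = (g.roots.toFinset.card : ℝ) := by simp
    _ ≤ 3 := by
      have : g.roots.toFinset.card ≤ 3 := by
        rw [← hgd]; exact (Multiset.toFinset_card_le _).trans (card_roots' _)
      exact_mod_cast this

lemma ext_bound (χ₁ χ₂ : MulChar F ℂ) (ψ : AddChar F ℂ) (hne : ¬ (χ₁ = 1 ∧ χ₂ = 1 ∧ ψ = 1)) :
    ∃ K : ℝ, ∀ (L : Type) [Field L] [Fintype L] [Algebra F L] (m : ℕ), 0 < m →
      Fintype.card L = (Fintype.card F ^ m) ^ 2 →
      ‖SS χ₁ χ₂ ψ L‖ ≤ K * (Fintype.card F : ℝ) ^ m := by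
  by_cases h : χ₁ = 1 ∧ χ₂ = 1
  · obtain ⟨rfl, rfl⟩ := h
    have hψ : ψ ≠ 1 := fun h => hne ⟨rfl, rfl, h⟩
    refine ⟨3, fun L _ _ _ m _ _ => (ext_bound_add ψ hψ L).trans ?_⟩
    have : (1 : ℝ) ≤ (Fintype.card F : ℝ) ^ m := by
      apply one_le_pow₀
      exact_mod_cast (Fintype.card_pos : 0 < Fintype.card F)
    linarith
  · exact ext_bound_mul χ₁ χ₂ ψ h

end Ext
end Weil16


namespace Weil16
open Polynomial

section LFun
set_option linter.unusedSectionVars false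

variable {F : Type*} [Field F] [Fintype F]

lemma finite_mon (F : Type*) [Field F] [Fintype F] (n : ℕ) : {f : F[X] | f.Monic ∧ f.natDegree = n}.Finite := by
  apply Set.Finite.of_finite_image (f := fun f : F[X] => fun i : Fin (n+1) => f.coeff i) (Set.toFinite _)
  intro f hf g hg hfg
  ext i
  by_cases hi : i < n + 1
  · exact congrFun hfg ⟨i, hi⟩
  · rw [coeff_eq_zero_of_natDegree_lt (by rw [hf.2]; omega), coeff_eq_zero_of_natDegree_lt (by rw [hg.2]; omega)]

/-- monic polynomials of degree `n` -/
noncomputable def Mon (F : Type*) [Field F] [Fintype F] (n : ℕ) : Finset F[X] := (finite_mon F n).toFinset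

lemma mem_Mon {n : ℕ} {f : F[X]} : f ∈ Mon F n ↔ f.Monic ∧ f.natDegree = n := by
  simp [Mon]

open Classical in
/-- monic irreducible polynomials of degree at most `n` -/
noncomputable def Irr (F : Type*) [Field F] [Fintype F] (n : ℕ) : Finset F[X] :=
  ((Finset.range (n + 1)).biUnion (Mon F)).filter Irreducible

lemma mem_Irr {n : ℕ} {f : F[X]} : f ∈ Irr F n ↔ f.Monic ∧ Irreducible f ∧ f.natDegree ≤ n := by
  simp only [Irr, Finset.mem_filter, Finset.mem_biUnion, Finset.mem_range, mem_Mon]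
  constructor
  · rintro ⟨⟨k, hk, h1, h2⟩, h3⟩
    exact ⟨h1, h3, by omega⟩
  · rintro ⟨h1, h2, h3⟩
    exact ⟨⟨f.natDegree, by omega, h1, rfl⟩, h2⟩

noncomputable def cc (lam : F[X] → ℂ) (n : ℕ) : ℂ := ∑ f ∈ Mon F n, lam f

noncomputable def Sk (lam : F[X] → ℂ) (k : ℕ) : ℂ :=
  ∑ P ∈ Irr F k, if P.natDegree ∣ k then (P.natDegree : ℂ) * lam P ^ (k / P.natDegree) else 0

open Classical in
lemma degree_count (n : ℕ) (f : F[X]) (hf : f ∈ Mon F n) :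
    (n : ℂ) = ∑ P ∈ Irr F n, ∑ a ∈ Finset.Icc 1 n, if P ^ a ∣ f then (P.natDegree : ℂ) else 0 := by
  rw [mem_Mon] at hf
  obtain ⟨hm, hn⟩ := hf
  have hf0 : f ≠ 0 := hm.ne_zero
  have hmonic : ∀ P ∈ UniqueFactorizationMonoid.normalizedFactors f, P.Monic := by
    intro P hP
    have h1 := UniqueFactorizationMonoid.normalize_normalized_factor P hP
    have h2 := (UniqueFactorizationMonoid.irreducible_of_normalized_factor P hP).ne_zero
    rw [← h1]; exact monic_normalize h2
  have hprod : (UniqueFactorizationMonoid.normalizedFactors f).prod = f := by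
    have := UniqueFactorizationMonoid.prod_normalizedFactors hf0
    exact eq_of_monic_of_associated (monic_multiset_prod_of_monic _ _ (fun P hP => by simpa using hmonic P hP) |> fun h => by simpa using h) hm this
  have hdeg : n = ((UniqueFactorizationMonoid.normalizedFactors f).map natDegree).sum := by
    rw [← hn]
    conv_lhs => rw [← hprod]
    exact natDegree_multiset_prod_of_monic _ hmonic
  have hpos : ∀ P : F[X], Irreducible P → 0 < P.natDegree := fun P hP => hP.natDegree_pos
  have hcount : ∀ P ∈ Irr F n, ∑ a ∈ Finset.Icc 1 n, (if P ^ a ∣ f then (P.natDegree : ℂ) else 0)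
      = ((UniqueFactorizationMonoid.normalizedFactors f).count P : ℂ) * P.natDegree := by
    intro P hP
    rw [mem_Irr] at hP
    obtain ⟨hPm, hPi, hPn⟩ := hP
    have hdv : ∀ a, P ^ a ∣ f ↔ a ≤ (UniqueFactorizationMonoid.normalizedFactors f).count P := by
      intro a
      rw [pow_dvd_iff_le_emultiplicity, UniqueFactorizationMonoid.emultiplicity_eq_count_normalizedFactors hPi hf0,
        hPm.normalize_eq_self]
      exact_mod_cast Iff.rfl
    have hle : (UniqueFactorizationMonoid.normalizedFactors f).count P ≤ n := by
      have := natDegree_le_of_dvd ((hdv _).mpr le_rfl) hf0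
      rw [natDegree_pow, hn] at this
      have := hpos P hPi
      nlinarith
    rw [← Finset.sum_filter, Finset.sum_const, nsmul_eq_mul]
    congr 2
    have : (Finset.Icc 1 n).filter (fun a => P ^ a ∣ f) = Finset.Icc 1 ((UniqueFactorizationMonoid.normalizedFactors f).count P) := by
      ext a; simp only [Finset.mem_filter, Finset.mem_Icc, hdv]; omega
    rw [this]; simp
  rw [Finset.sum_congr rfl hcount]
  have h2 : ((UniqueFactorizationMonoid.normalizedFactors f).map natDegree).sum =
      ∑ P ∈ (UniqueFactorizationMonoid.normalizedFactors f).toFinset,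
        (UniqueFactorizationMonoid.normalizedFactors f).count P * P.natDegree := by
    rw [Finset.sum_multiset_map_count]; simp
  conv_lhs => rw [hdeg, h2]
  push_cast
  apply Finset.sum_subset
  · intro P hP
    rw [Multiset.mem_toFinset] at hP
    rw [mem_Irr]
    refine ⟨hmonic P hP, UniqueFactorizationMonoid.irreducible_of_normalized_factor P hP, ?_⟩
    rw [← hn]
    exact natDegree_le_of_dvd (UniqueFactorizationMonoid.dvd_of_mem_normalizedFactors hP) hf0
  · intro P _ hP
    rw [Multiset.mem_toFinset, ← Multiset.count_eq_zero] at hP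
    rw [hP]; simp

variable (lam : F[X] → ℂ) (h1 : lam 1 = 1)
  (hmul : ∀ f g : F[X], f.Monic → g.Monic → lam (f * g) = lam f * lam g)
include h1 hmul

lemma lam_pow (f : F[X]) (hf : f.Monic) (a : ℕ) : lam (f ^ a) = lam f ^ a := by
  induction a with
  | zero => simp [h1]
  | succ a ih => rw [pow_succ, hmul _ _ (hf.pow a) hf, ih, pow_succ]

open Classical in
lemma sum_dvd (n a : ℕ) (P : F[X]) (hP : P.Monic) :
    ∑ f ∈ Mon F n, (if P ^ a ∣ f then lam f else 0) =
      if a * P.natDegree ≤ n then lam P ^ a * cc lam (n - a * P.natDegree) else 0 := by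
  have hPa : (P ^ a).Monic := hP.pow a
  have hdeg : (P ^ a).natDegree = a * P.natDegree := hP.natDegree_pow a
  split_ifs with h
  · rw [cc, Finset.mul_sum, ← Finset.sum_filter]
    symm
    apply Finset.sum_bij (fun g _ => P ^ a * g)
    · intro g hg
      rw [mem_Mon] at hg
      rw [Finset.mem_filter, mem_Mon]
      refine ⟨⟨hPa.mul hg.1, ?_⟩, dvd_mul_right _ _⟩
      rw [hPa.natDegree_mul hg.1, hdeg, hg.2]; omega
    · intro g _ g' _ hgg
      exact mul_left_cancel₀ hPa.ne_zero hgg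
    · intro f hf
      rw [Finset.mem_filter, mem_Mon] at hf
      obtain ⟨⟨hm, hn⟩, g, rfl⟩ := hf
      have hg : g.Monic := hPa.of_mul_monic_left hm
      refine ⟨g, ?_, rfl⟩
      rw [mem_Mon]
      refine ⟨hg, ?_⟩
      rw [hPa.natDegree_mul hg, hdeg] at hn; omega
    · intro g hg
      rw [mem_Mon] at hg
      rw [hmul _ _ hPa hg.1, lam_pow lam h1 hmul P hP]
  · apply Finset.sum_eq_zero
    intro f hf
    rw [mem_Mon] at hf
    rw [if_neg]
    intro hd
    have := natDegree_le_of_dvd hd hf.1.ne_zero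
    omega

lemma newton_cc (n : ℕ) : (n : ℂ) * cc lam n = ∑ k ∈ Finset.Icc 1 n, Sk lam k * cc lam (n - k) := by
  classical
  have hL : (n : ℂ) * cc lam n = ∑ P ∈ Irr F n, ∑ a ∈ Finset.Icc 1 n,
      if a * P.natDegree ≤ n then (P.natDegree : ℂ) * (lam P ^ a * cc lam (n - a * P.natDegree)) else 0 := by
    calc (n : ℂ) * cc lam n = ∑ f ∈ Mon F n, (∑ P ∈ Irr F n, ∑ a ∈ Finset.Icc 1 n,
          if P ^ a ∣ f then (P.natDegree : ℂ) else 0) * lam f := by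
          rw [cc, Finset.mul_sum]
          exact Finset.sum_congr rfl fun f hf => by rw [← degree_count n f hf]
      _ = ∑ P ∈ Irr F n, ∑ a ∈ Finset.Icc 1 n, ∑ f ∈ Mon F n,
          (P.natDegree : ℂ) * (if P ^ a ∣ f then lam f else 0) := by
          simp_rw [Finset.sum_mul]
          rw [Finset.sum_comm]
          refine Finset.sum_congr rfl fun P _ => ?_
          rw [Finset.sum_comm]
          refine Finset.sum_congr rfl fun a _ => Finset.sum_congr rfl fun f _ => ?_
          split_ifs <;> simp
      _ = _ := by
          refine Finset.sum_congr rfl fun P hP => Finset.sum_congr rfl fun a _ => ?_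
          rw [← Finset.mul_sum, sum_dvd lam h1 hmul n a P (mem_Irr.mp hP).1]
          split_ifs <;> simp
  rw [hL]
  have hS : ∀ k ∈ Finset.Icc 1 n, Sk lam k = ∑ P ∈ Irr F n, ∑ a ∈ Finset.Icc 1 n,
      if a * P.natDegree = k then (P.natDegree : ℂ) * lam P ^ a else 0 := by
    intro k hk
    rw [Finset.mem_Icc] at hk
    have hin : ∀ P ∈ Irr F n, (∑ a ∈ Finset.Icc 1 n,
        if a * P.natDegree = k then (P.natDegree : ℂ) * lam P ^ a else 0) =
        if P.natDegree ∣ k then (P.natDegree : ℂ) * lam P ^ (k / P.natDegree) else 0 := by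
      intro P hP
      have hpos := (mem_Irr.mp hP).2.1.natDegree_pos
      split_ifs with hd
      · obtain ⟨b, rfl⟩ := hd
        have hb0 : 0 < b := by
          rcases Nat.eq_zero_or_pos b with h | h
          · subst h; omega
          · exact h
        have hbn : b ≤ n := by nlinarith
        rw [Finset.sum_eq_single b]
        · rw [if_pos (mul_comm _ _), Nat.mul_div_cancel_left _ hpos]
        · intro a _ hab
          rw [if_neg]
          intro h
          rw [mul_comm] at h
          exact hab (Nat.eq_of_mul_eq_mul_left hpos h)
        · intro h
          exact absurd (Finset.mem_Icc.mpr ⟨hb0, hbn⟩) h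
      · refine Finset.sum_eq_zero fun a _ => ?_
        rw [if_neg]
        rintro rfl
        exact hd (dvd_mul_left _ _)
    rw [Finset.sum_congr rfl hin, Sk]
    apply Finset.sum_subset
    · intro P hP
      rw [mem_Irr] at hP ⊢
      exact ⟨hP.1, hP.2.1, by omega⟩
    · intro P hP hP'
      rw [if_neg]
      intro hd
      apply hP'
      rw [mem_Irr] at hP ⊢
      exact ⟨hP.1, hP.2.1, Nat.le_of_dvd (by omega) hd⟩
  calc _ = ∑ P ∈ Irr F n, ∑ a ∈ Finset.Icc 1 n, ∑ k ∈ Finset.Icc 1 n,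
        (if a * P.natDegree = k then (P.natDegree : ℂ) * lam P ^ a else 0) * cc lam (n - k) := by
        refine Finset.sum_congr rfl fun P hP => Finset.sum_congr rfl fun a ha => ?_
        have hpos := (mem_Irr.mp hP).2.1.natDegree_pos
        rw [Finset.mem_Icc] at ha
        have h0 : 1 ≤ a * P.natDegree := Nat.mul_pos ha.1 hpos
        simp_rw [ite_mul, zero_mul]
        rw [Finset.sum_ite_eq]
        simp only [Finset.mem_Icc, h0, true_and]
        split_ifs
        · ring
        · rfl
    _ = _ := by
        have : ∀ k ∈ Finset.Icc 1 n, Sk lam k * cc lam (n - k) = ∑ P ∈ Irr F n, ∑ a ∈ Finset.Icc 1 n,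
          (if a * P.natDegree = k then (P.natDegree : ℂ) * lam P ^ a else 0) * cc lam (n - k) := by
          intro k hk
          rw [hS k hk, Finset.sum_mul]
          exact Finset.sum_congr rfl fun P _ => Finset.sum_mul _ _ _
        rw [Finset.sum_congr rfl this]
        rw [Finset.sum_comm' (t' := Irr F n) (s' := fun _ => Finset.Icc 1 n) (by simp [and_comm])]
        refine Finset.sum_congr rfl fun P _ => ?_
        rw [Finset.sum_comm]

omit h1 hmul in
lemma cc_zero (h1 : lam 1 = 1) : cc lam 0 = 1 := by
  have : Mon F 0 = {1} := by
    ext f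
    rw [mem_Mon, Finset.mem_singleton]
    constructor
    · rintro ⟨h, h'⟩; exact h.natDegree_eq_zero.mp h'
    · rintro rfl; simp
  rw [cc, this, Finset.sum_singleton, h1]

end LFun

section Newton

/-- generating series of positive power sums -/
noncomputable def GG (s : Multiset ℂ) : PowerSeries ℂ :=
  PowerSeries.mk fun k => if k = 0 then 0 else (s.map fun α => α ^ k).sum

noncomputable def CCp (s : Multiset ℂ) : PowerSeries ℂ := (s.map fun α => 1 - PowerSeries.C α * PowerSeries.X).prod

lemma GG_cons (α : ℂ) (s : Multiset ℂ) : GG (α ::ₘ s) = GG {α} + GG s := by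
  ext k
  simp only [GG, PowerSeries.coeff_mk, map_add, Multiset.map_cons, Multiset.sum_cons, Multiset.map_singleton,
    Multiset.sum_singleton]
  split_ifs <;> simp

lemma GG_single (α : ℂ) : GG {α} * (1 - PowerSeries.C α * PowerSeries.X) = PowerSeries.C α * PowerSeries.X := by
  ext k
  rw [mul_sub, mul_one, map_sub, mul_comm (PowerSeries.C α), ← mul_assoc, PowerSeries.coeff_mul_C]
  rcases k with _ | k
  · simp [GG]
  · rw [PowerSeries.coeff_succ_mul_X, PowerSeries.coeff_mul_C]
    simp only [GG, PowerSeries.coeff_mk, Multiset.map_singleton, Multiset.sum_singleton]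
    rcases k with _ | k
    · simp
    · rw [PowerSeries.coeff_X]; simp [pow_succ]

lemma newton_ps (s : Multiset ℂ) : PowerSeries.X * PowerSeries.derivative ℂ (CCp s) = - (GG s * CCp s) := by
  induction s using Multiset.induction_on with
  | empty =>
    have h1 : CCp 0 = PowerSeries.C 1 := by simp [CCp]
    have h2 : GG 0 = 0 := by ext k; simp [GG]
    rw [h1, h2, PowerSeries.derivative_C]; simp
  | cons α s ih =>
    have hC : CCp (α ::ₘ s) = (1 - PowerSeries.C α * PowerSeries.X) * CCp s := by simp [CCp]
    have hd : PowerSeries.derivative ℂ (1 - PowerSeries.C α * PowerSeries.X) = - PowerSeries.C α := by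
      ext k
      rw [PowerSeries.coeff_derivative]
      rcases k with _ | k <;> simp [PowerSeries.coeff_X, PowerSeries.coeff_one, PowerSeries.coeff_C]
    rw [hC, Derivation.leibniz, GG_cons, hd]
    simp only [smul_eq_mul]
    linear_combination (1 - PowerSeries.C α * PowerSeries.X) * ih + CCp s * GG_single α

lemma newton_unique (c S : ℕ → ℂ) (M : ℕ) (hc0 : c 0 = 1) (hcM : ∀ n, M < n → c n = 0)
    (hrec : ∀ n : ℕ, (n : ℂ) * c n = ∑ k ∈ Finset.Icc 1 n, S k * c (n - k)) :
    ∃ s : Multiset ℂ, s.card = M ∧ ∀ k, 0 < k → S k = - (s.map fun α => α ^ k).sum := by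
  classical
  -- reversed polynomial
  let p : ℂ[X] := ∑ i ∈ Finset.range (M + 1), monomial (M - i) (c i)
  have hpc : ∀ j, j ≤ M → p.coeff (M - j) = c j := by
    intro j hj
    simp only [p, finsetSum_coeff, coeff_monomial]
    rw [Finset.sum_eq_single j]
    · simp
    · intro i hi hij
      rw [Finset.mem_range] at hi
      rw [if_neg (by omega)]
    · intro h; exact absurd (Finset.mem_range.mpr (by omega)) h
  have hpd : p.natDegree ≤ M := by
    apply natDegree_sum_le_of_forall_le
    intro i hi
    exact (natDegree_monomial_le _).trans (by omega)
  have hpm : p.Monic := monic_of_natDegree_le_of_coeff_eq_one M hpd (by have := hpc 0 (by omega); simpa [hc0] using this)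
  have hpn : p.natDegree = M := by
    apply le_antisymm hpd
    apply le_natDegree_of_ne_zero
    have := hpc 0 (by omega)
    simp at this; rw [this, hc0]; exact one_ne_zero
  have hsplit := IsAlgClosed.splits p
  have hprod := hsplit.eq_prod_roots_of_monic hpm
  have hcard : p.roots.card = M := by rw [← hsplit.natDegree_eq_card_roots, hpn]
  refine ⟨p.roots, hcard, ?_⟩
  -- the series is CCp
  have hCC : ∀ n, PowerSeries.coeff n (CCp p.roots) = c n := by
    have hrev : p.reverse = (p.roots.map fun α => 1 - C α * X).prod := by
      have key : ∀ s : Multiset ℂ, ((s.map fun α => X - C α).prod : ℂ[X]).reverse = (s.map fun α => 1 - C α * X).prod := by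
        intro s
        induction s using Multiset.induction_on with
        | empty => simp [reverse]
        | cons α s ih =>
          rw [Multiset.map_cons, Multiset.prod_cons, Multiset.map_cons, Multiset.prod_cons, reverse_mul_of_domain, ih]
          congr 1
          have : (X - C α : ℂ[X]).natDegree = 1 := natDegree_X_sub_C α
          rw [reverse, this]
          rw [reflect_sub]
          simp
      conv_lhs => rw [hprod]
      exact key _
    intro n
    have hco : CCp p.roots = ((p.reverse : ℂ[X]) : PowerSeries ℂ) := by
      rw [hrev, ← Polynomial.coeToPowerSeries.ringHom_apply, map_multiset_prod, Multiset.map_map]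
      rw [CCp]
      congr 1
      refine Multiset.map_congr rfl fun α _ => ?_
      simp [Polynomial.coeToPowerSeries.ringHom_apply]
    rw [hco, Polynomial.coeff_coe, coeff_reverse, hpn]
    by_cases hn : n ≤ M
    · rw [revAt_le hn, hpc n hn]
    · rw [revAt_eq_self_of_lt (by omega), hcM n (by omega), coeff_eq_zero_of_natDegree_lt (by omega)]
  have hrec2 : ∀ n : ℕ, (n : ℂ) * c n = ∑ k ∈ Finset.Icc 1 n, (- (p.roots.map fun α => α ^ k).sum) * c (n - k) := by
    intro n
    rcases n with _ | n
    · simp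
    have h := congrArg (PowerSeries.coeff (n + 1)) (newton_ps p.roots)
    rw [PowerSeries.coeff_succ_X_mul, PowerSeries.coeff_derivative, hCC, map_neg, PowerSeries.coeff_mul,
      Finset.Nat.sum_antidiagonal_eq_sum_range_succ_mk] at h
    rw [Finset.sum_range_succ'] at h
    simp only [hCC, GG, PowerSeries.coeff_mk] at h
    have hI : Finset.Icc 1 (n + 1) = (Finset.range (n + 1)).image (· + 1) := by
      ext x; simp only [Finset.mem_Icc, Finset.mem_image, Finset.mem_range]
      constructor
      · intro hx; exact ⟨x - 1, by omega, by omega⟩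
      · rintro ⟨y, hy, rfl⟩; omega
    rw [hI, Finset.sum_image (by intro a _ b _ h; simpa using h)]
    simp only [Nat.add_eq_zero_iff, one_ne_zero, and_false, if_false, if_true, zero_mul, add_zero] at h
    push_cast
    rw [mul_comm, h, ← Finset.sum_neg_distrib]
    exact Finset.sum_congr rfl fun k _ => by simp
  intro k
  induction k using Nat.strong_induction_on with
  | _ k ih =>
    intro hk
    have e1 := hrec k
    have e2 := hrec2 k
    rw [e1] at e2
    have hmem : k ∈ Finset.Icc 1 k := Finset.mem_Icc.mpr ⟨hk, le_rfl⟩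
    rw [← Finset.add_sum_erase _ _ hmem, ← Finset.add_sum_erase _ _ hmem] at e2
    have e3 : ∑ x ∈ (Finset.Icc 1 k).erase k, S x * c (k - x) =
        ∑ x ∈ (Finset.Icc 1 k).erase k, (- (p.roots.map fun α => α ^ x).sum) * c (k - x) := by
      refine Finset.sum_congr rfl fun x hx => ?_
      rw [Finset.mem_erase, Finset.mem_Icc] at hx
      rw [ih x (by omega) (by omega)]
    rw [e3] at e2
    have e4 := add_right_cancel e2
    simpa [hc0] using e4

lemma powersum_bound (s : Multiset ℂ) (K : ℝ) (hK : ∀ m : ℕ, 0 < m → ‖(s.map fun β => β ^ m).sum‖ ≤ K)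
    (β : ℂ) (hβ : β ∈ s) : ‖β‖ ≤ 1 := by
  classical
  let Q : ℂ[X] := ∏ b ∈ s.toFinset.erase β, (X - C b)
  have hQ0 : ∀ b ∈ s, b ≠ β → Q.eval b = 0 := by
    intro b hb hne
    simp only [Q, eval_prod]
    apply Finset.prod_eq_zero (i := b)
    · simp [hne, hb]
    · simp
  have hQ1 : Q.eval β ≠ 0 := by
    simp only [Q, eval_prod]
    rw [Finset.prod_ne_zero_iff]
    intro b hb
    rw [Finset.mem_erase] at hb
    simp only [eval_sub, eval_X, eval_C]
    exact sub_ne_zero.mpr hb.1.symm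
  have hsum : ∀ m : ℕ, ∑ j ∈ Finset.range (Q.natDegree + 1), Q.coeff j * (s.map fun b => b ^ (m + j)).sum =
      s.count β * (β ^ m * Q.eval β) := by
    intro m
    have h1 : ∑ j ∈ Finset.range (Q.natDegree + 1), Q.coeff j * (s.map fun b => b ^ (m + j)).sum =
        (s.map fun b => b ^ m * Q.eval b).sum := by
      simp_rw [← Multiset.sum_map_mul_left]
      rw [← Multiset.sum_map_sum]
      congr 1
      refine Multiset.map_congr rfl fun b _ => ?_
      rw [eval_eq_sum_range, Finset.mul_sum]
      exact Finset.sum_congr rfl fun j _ => by ring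
    rw [h1, Finset.sum_multiset_map_count, Finset.sum_eq_single β]
    · rw [nsmul_eq_mul]
    · intro b hb hne
      rw [hQ0 b (by simpa using hb) hne]; simp
    · intro h; exact absurd (Multiset.mem_toFinset.mpr hβ) h
  have hcnt : (1 : ℝ) ≤ s.count β := by exact_mod_cast Multiset.count_pos.mpr hβ
  set B : ℝ := ∑ j ∈ Finset.range (Q.natDegree + 1), ‖Q.coeff j‖ * K with hB
  have hbd : ∀ m : ℕ, 0 < m → ‖β‖ ^ m * ‖Q.eval β‖ ≤ B := by
    intro m hm
    calc ‖β‖ ^ m * ‖Q.eval β‖ ≤ s.count β * (‖β‖ ^ m * ‖Q.eval β‖) := by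
          apply le_mul_of_one_le_left (by positivity) hcnt
      _ = ‖∑ j ∈ Finset.range (Q.natDegree + 1), Q.coeff j * (s.map fun b => b ^ (m + j)).sum‖ := by
          rw [hsum]; simp
      _ ≤ ∑ j ∈ Finset.range (Q.natDegree + 1), ‖Q.coeff j * (s.map fun b => b ^ (m + j)).sum‖ := norm_sum_le _ _
      _ ≤ B := by
          refine Finset.sum_le_sum fun j _ => ?_
          rw [norm_mul]
          exact mul_le_mul_of_nonneg_left (hK _ (by omega)) (norm_nonneg _)
  by_contra! hlt
  have hpos : 0 < ‖Q.eval β‖ := norm_pos_iff.mpr hQ1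
  obtain ⟨m, hm⟩ := pow_unbounded_of_one_lt (B / ‖Q.eval β‖) hlt
  have h2 := hbd (m + 1) (by omega)
  rw [div_lt_iff₀ hpos] at hm
  have h3 : ‖β‖ ^ m * ‖Q.eval β‖ ≤ ‖β‖ ^ (m + 1) * ‖Q.eval β‖ :=
    mul_le_mul_of_nonneg_right (pow_le_pow_right₀ hlt.le (by omega)) hpos.le
  linarith

lemma powersum_bound' (s : Multiset ℂ) (K ρ : ℝ) (hρ : 0 < ρ)
    (hK : ∀ m : ℕ, 0 < m → ‖(s.map fun β => β ^ (2 * m)).sum‖ ≤ K * (ρ ^ 2) ^ m) :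
    ‖s.sum‖ ≤ s.card * ρ := by
  have h1 : ∀ α ∈ s, ‖α‖ ≤ ρ := by
    intro α hα
    have := powersum_bound (s.map fun α => α ^ 2 / (ρ : ℂ) ^ 2) K (by
      intro m hm
      rw [Multiset.map_map]
      have : (s.map ((fun β => β ^ m) ∘ fun α => α ^ 2 / (ρ : ℂ) ^ 2)).sum =
          (s.map fun β => β ^ (2 * m)).sum / ((ρ : ℂ) ^ 2) ^ m := by
        rw [← Multiset.sum_map_div]
        congr 1
        refine Multiset.map_congr rfl fun b _ => ?_
        simp [div_pow, pow_mul]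
      rw [this, norm_div, div_le_iff₀ (by simp; positivity)]
      refine (hK m hm).trans (le_of_eq ?_)
      simp [abs_of_pos hρ]) (α ^ 2 / (ρ : ℂ) ^ 2) (Multiset.mem_map_of_mem _ hα)
    rw [norm_div, norm_pow, norm_pow, Complex.norm_real, Real.norm_eq_abs, abs_of_pos hρ,
      div_le_one (by positivity)] at this
    exact le_of_sq_le_sq this hρ.le |> fun h => h
  refine (norm_multiset_sum_le s).trans ?_
  have := Multiset.sum_le_card_nsmul (s.map fun α => ‖α‖) ρ (by
    intro x hx
    obtain ⟨α, hα, rfl⟩ := Multiset.mem_map.mp hx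
    exact h1 α hα)
  simpa using this

end Newton
end Weil16


namespace Weil16
open Polynomial

section Fib
set_option linter.unusedSectionVars false

variable {F : Type*} [Field F] [Fintype F]

lemma card_fiber {L : Type*} [Field L] [Fintype L] [Algebra F L] [DecidableEq L] {k : ℕ}
    (hL : Fintype.card L = Fintype.card F ^ k) (P : F[X]) (hm : P.Monic) (hi : Irreducible P)
    (hd : P.natDegree ∣ k) [DecidablePred fun x : L => minpoly F x = P] :
    (Finset.univ.filter fun x : L => minpoly F x = P).card = P.natDegree := by
  have hdv : P ∣ X ^ Fintype.card L - X := by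
    rw [hL, ← Nat.card_eq_fintype_card]
    exact hi.natDegree_dvd_iff_dvd_X_pow_card_pow_sub_X.mp hd
  have hdv' : P.map (algebraMap F L) ∣ X ^ Fintype.card L - X := by
    have := map_dvd (mapRingHom (algebraMap F L)) hdv
    simpa using this
  have hne : (X ^ Fintype.card L - X : L[X]) ≠ 0 := FiniteField.X_pow_card_sub_X_ne_zero L Fintype.one_lt_card
  have hsp : (X ^ Fintype.card L - X : L[X]).Splits := by
    rw [splits_iff_card_roots, FiniteField.roots_X_pow_card_sub_X,
      FiniteField.X_pow_card_sub_X_natDegree_eq L Fintype.one_lt_card]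
    rfl
  have hsp' := hsp.of_dvd hne hdv'
  have hsep : P.Separable := PerfectField.separable_of_irreducible hi
  rw [← card_rootSet_eq_natDegree hsep hsp', ← Set.toFinset_card]
  congr 1
  ext x
  simp only [Finset.mem_filter, Finset.mem_univ, true_and, Set.mem_toFinset, mem_rootSet]
  constructor
  · rintro rfl; exact ⟨hm.ne_zero, minpoly.aeval F x⟩
  · rintro ⟨-, h⟩; exact (minpoly.eq_of_irreducible_of_monic hi h hm).symm

lemma finrank_of_card {L : Type*} [Field L] [Fintype L] [Algebra F L] {k : ℕ}
    (hL : Fintype.card L = Fintype.card F ^ k) : Module.finrank F L = k := by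
  have h := Module.card_eq_pow_finrank (K := F) (V := L)
  rw [hL] at h
  exact (Nat.pow_right_injective (Fintype.one_lt_card : 1 < Fintype.card F) h).symm

lemma Sk_eq_sum {L : Type*} [Field L] [Fintype L] [Algebra F L] {k : ℕ} (hk : 0 < k)
    (hL : Fintype.card L = Fintype.card F ^ k) (lam : F[X] → ℂ) :
    Sk lam k = ∑ x : L, lam (minpoly F x) ^ (k / (minpoly F x).natDegree) := by
  classical
  have hmaps : ∀ x ∈ (Finset.univ : Finset L), minpoly F x ∈ Irr F k := by
    intro x _
    rw [mem_Irr]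
    have hi : IsIntegral F x := Algebra.IsIntegral.isIntegral x
    refine ⟨minpoly.monic hi, minpoly.irreducible hi, Nat.le_of_dvd hk ?_⟩
    rw [← finrank_of_card hL]; exact minpoly.degree_dvd hi
  rw [← Finset.sum_fiberwise_of_maps_to hmaps]
  unfold Sk
  refine Finset.sum_congr rfl fun P hP => ?_
  rw [mem_Irr] at hP
  have : ∀ x ∈ Finset.univ.filter (fun x : L => minpoly F x = P),
      lam (minpoly F x) ^ (k / (minpoly F x).natDegree) = lam P ^ (k / P.natDegree) := by
    intro x hx; rw [(Finset.mem_filter.mp hx).2]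
  rw [Finset.sum_congr rfl this, Finset.sum_const, nsmul_eq_mul]
  split_ifs with hd
  · rw [card_fiber hL P hP.1 hP.2.1 hd]
  · have : Finset.univ.filter (fun x : L => minpoly F x = P) = ∅ := by
      rw [Finset.filter_eq_empty_iff]
      intro x _ hx
      apply hd
      rw [← hx, ← finrank_of_card hL]
      exact minpoly.degree_dvd (Algebra.IsIntegral.isIntegral x)
    rw [this]; simp

/-- `a^2+b^2` where `f ≡ a + b X mod X^2+1`. -/
noncomputable def RR (f : F[X]) : F := ((f %ₘ (X ^ 2 + 1)).coeff 0) ^ 2 + ((f %ₘ (X ^ 2 + 1)).coeff 1) ^ 2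

lemma monic_sq1 : (X ^ 2 + 1 : F[X]).Monic := by monicity!

lemma natDegree_sq1 : (X ^ 2 + 1 : F[X]).natDegree = 2 := by compute_degree!

lemma mod_form (f : F[X]) : f %ₘ (X ^ 2 + 1) = C ((f %ₘ (X ^ 2 + 1)).coeff 0) + C ((f %ₘ (X ^ 2 + 1)).coeff 1) * X := by
  have h : (f %ₘ (X ^ 2 + 1)).natDegree ≤ 1 := by
    have := natDegree_modByMonic_lt f (monic_sq1 (F := F)) (by intro h; have := natDegree_sq1 (F := F); rw [h] at this; simp at this)
    rw [natDegree_sq1] at this; omega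
  conv_lhs => rw [eq_X_add_C_of_natDegree_le_one h]
  ring

lemma RR_spec {Ω : Type*} [Field Ω] [Algebra F Ω] (i : Ω) (hi : i ^ 2 = -1) (f : F[X]) :
    algebraMap F Ω (RR f) = aeval i f * aeval (-i) f := by
  have key : ∀ j : Ω, j ^ 2 = -1 → aeval j f = algebraMap F Ω ((f %ₘ (X ^ 2 + 1)).coeff 0) + algebraMap F Ω ((f %ₘ (X ^ 2 + 1)).coeff 1) * j := by
    intro j hj
    conv_lhs => rw [← modByMonic_add_div f (X ^ 2 + 1), mod_form f]
    simp [hj]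
  rw [key i hi, key (-i) (by rw [neg_sq, hi]), RR, map_add, map_pow, map_pow]
  linear_combination (algebraMap F Ω ((f %ₘ (X ^ 2 + 1)).coeff 1)) ^ 2 * hi

lemma exists_i (F : Type*) [Field F] : ∃ i : AlgebraicClosure F, i ^ 2 = -1 :=
  IsAlgClosed.exists_pow_nat_eq (-1) (by norm_num)

lemma RR_mul (f g : F[X]) : RR (f * g) = RR f * RR g := by
  obtain ⟨i, hi⟩ := exists_i F
  apply (algebraMap F (AlgebraicClosure F)).injective
  rw [map_mul, RR_spec i hi, RR_spec i hi, RR_spec i hi, map_mul, map_mul]; ring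

lemma RR_one : RR (1 : F[X]) = 1 := by
  obtain ⟨i, hi⟩ := exists_i F
  apply (algebraMap F (AlgebraicClosure F)).injective
  rw [RR_spec i hi]; simp

lemma norm_gen_sq {K : Type*} [Field K] [Algebra F K] (pb : PowerBasis F K) :
    Algebra.norm F (pb.gen ^ 2 + 1) = RR (minpoly F pb.gen) := by
  obtain ⟨i, hi⟩ := exists_i F
  apply (algebraMap F (AlgebraicClosure F)).injective
  rw [RR_spec i hi, Algebra.norm_eq_matrix_det pb.basis, map_add, map_pow, map_one, ← charpoly_leftMulMatrix]
  set M := Algebra.leftMulMatrix pb.basis pb.gen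
  have h : ∀ j : AlgebraicClosure F, aeval j M.charpoly = (Matrix.scalar _ j - M.map (algebraMap F _)).det := by
    intro j
    rw [aeval_def, ← eval_map, ← Matrix.charpoly_map, Matrix.eval_charpoly]
  rw [h, h, ← Matrix.det_mul, RingHom.map_det]
  congr 1
  rw [RingHom.map_add, RingHom.map_pow, RingHom.map_one, RingHom.mapMatrix_apply]
  set N := M.map (algebraMap F (AlgebraicClosure F))
  have hs : (Matrix.scalar (Fin pb.dim) (-i)) = - Matrix.scalar (Fin pb.dim) i := by rw [map_neg]
  have hs2 : (Matrix.scalar (Fin pb.dim) i) * (Matrix.scalar (Fin pb.dim) i) = -1 := by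
    rw [← map_mul, ← sq, hi, map_neg, map_one]
  have hc : Matrix.scalar (Fin pb.dim) i * N = N * Matrix.scalar (Fin pb.dim) i := 
    (Matrix.scalar_commute i (fun r => mul_comm _ _) N).eq
  rw [hs]
  generalize Matrix.scalar (Fin pb.dim) i = A at *
  have : (A - N) * (-A - N) = -(A * A) - A * N + N * A + N ^ 2 := by noncomm_ring
  rw [this, hc, hs2]; noncomm_ring

/-- the completely multiplicative function attached to the characters -/
noncomputable def lam (χ₁ χ₂ : MulChar F ℂ) (ψ : AddChar F ℂ) (f : F[X]) : ℂ :=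
  χ₁ ((-1) ^ f.natDegree * f.coeff 0) * χ₂ (RR f) * ψ (-f.nextCoeff)

lemma lam_one (χ₁ χ₂ : MulChar F ℂ) (ψ : AddChar F ℂ) : lam χ₁ χ₂ ψ 1 = 1 := by
  have : (1 : F[X]).nextCoeff = 0 := by simp [nextCoeff]
  simp [lam, RR_one, this]

lemma lam_mul (χ₁ χ₂ : MulChar F ℂ) (ψ : AddChar F ℂ) (f g : F[X]) (hf : f.Monic) (hg : g.Monic) :
    lam χ₁ χ₂ ψ (f * g) = lam χ₁ χ₂ ψ f * lam χ₁ χ₂ ψ g := by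
  unfold lam
  rw [hf.natDegree_mul hg, mul_coeff_zero, RR_mul, hf.nextCoeff_mul hg, neg_add, AddChar.map_add_eq_mul, map_mul χ₂,
    show (-1 : F) ^ (f.natDegree + g.natDegree) * (f.coeff 0 * g.coeff 0) =
      ((-1) ^ f.natDegree * f.coeff 0) * ((-1) ^ g.natDegree * g.coeff 0) by rw [pow_add]; ring, map_mul χ₁]
  ring

lemma lam_minpoly (χ₁ χ₂ : MulChar F ℂ) (ψ : AddChar F ℂ) {L : Type*} [Field L] [Fintype L] [Algebra F L] {k : ℕ}
    (hL : Fintype.card L = Fintype.card F ^ k) (x : L) :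
    lam χ₁ χ₂ ψ (minpoly F x) ^ (k / (minpoly F x).natDegree) =
      χ₁ (Algebra.norm F x) * χ₂ (Algebra.norm F (x ^ 2 + 1)) * ψ (Algebra.trace F L x) := by
  have hint : IsIntegral F x := Algebra.IsIntegral.isIntegral x
  set K := IntermediateField.adjoin F {x} with hK
  set e := Module.finrank K L with he
  have hfin : Module.finrank F K = (minpoly F x).natDegree := IntermediateField.adjoin.finrank hint
  have hdpos : 0 < (minpoly F x).natDegree := minpoly.natDegree_pos hint
  have hke : k / (minpoly F x).natDegree = e := by
    rw [← finrank_of_card hL, ← Module.finrank_mul_finrank F K L, hfin]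
    exact Nat.mul_div_cancel_left _ hdpos
  rw [hke]
  have hnorm : ∀ y : K, Algebra.norm F (algebraMap K L y) = Algebra.norm F y ^ e := by
    intro y
    rw [← Algebra.norm_norm (S := K), Algebra.norm_algebraMap, map_pow]
  let pb := IntermediateField.adjoin.powerBasis hint
  have hgen : pb.gen = IntermediateField.AdjoinSimple.gen F x := rfl
  have hgx : algebraMap K L pb.gen = x := IntermediateField.AdjoinSimple.algebraMap_gen F x
  have hmp : minpoly F pb.gen = minpoly F x := by
    have h := minpoly.algebraMap_eq (A := F) (algebraMap K L).injective pb.gen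
    have h' : minpoly F (algebraMap K L pb.gen) = minpoly F x := congrArg _ hgx
    exact h.symm.trans h'
  have h1 : Algebra.norm F x = ((-1) ^ (minpoly F x).natDegree * (minpoly F x).coeff 0) ^ e := by
    have := Algebra.PowerBasis.norm_gen_eq_coeff_zero_minpoly pb
    rw [hmp] at this
    have h' : Algebra.norm F (algebraMap K L pb.gen) = Algebra.norm F x := congrArg _ hgx
    rw [← h', hnorm, this]; rfl
  have h2 : Algebra.norm F (x ^ 2 + 1) = (RR (minpoly F x)) ^ e := by
    have := norm_gen_sq pb
    rw [hmp] at this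
    have h' : algebraMap K L (pb.gen ^ 2 + 1) = x ^ 2 + 1 := by
      rw [map_add, map_pow, map_one]; exact congrArg (fun y => y ^ 2 + 1) hgx
    rw [← h', hnorm, this]
  have h3 : Algebra.trace F L x = e • (-(minpoly F x).nextCoeff) := by
    rw [trace_eq_finrank_mul_minpoly_nextCoeff, nsmul_eq_mul]
  rw [h1, h2, h3, AddChar.map_nsmul_eq_pow, map_pow, map_pow, ← mul_pow, ← mul_pow]
  rfl

end Fib
end Weil16


namespace Weil16
open Polynomial

section Vanish
set_option linter.unusedSectionVars false

variable {F : Type*} [Field F] [Fintype F]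

lemma vanish_of (l : F[X] → ℂ) (n : ℕ) (G : F[X] → F[X]) (c : ℂ) (hc : c ≠ 1)
    (hG : ∀ f ∈ Mon F n, (G f).degree < n)
    (hinj : ∀ f ∈ Mon F n, ∀ g ∈ Mon F n, f + G f = g + G g → G f = G g)
    (hl : ∀ f ∈ Mon F n, (f + G f).natDegree = n → l (f + G f) = c * l f) : cc l n = 0 := by
  have hdeg : ∀ f ∈ Mon F n, (G f).degree < f.degree := by
    intro f hf
    have h := hG f hf
    rw [mem_Mon] at hf
    rwa [degree_eq_natDegree hf.1.ne_zero, hf.2]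
  have hmaps : ∀ f ∈ Mon F n, f + G f ∈ Mon F n := by
    intro f hf
    have h := hdeg f hf
    rw [mem_Mon] at hf ⊢
    refine ⟨hf.1.add_of_left h, ?_⟩
    rw [natDegree_add_eq_left_of_degree_lt h, hf.2]
  have hinj' : Set.InjOn (fun f => f + G f) (Mon F n : Set F[X]) := by
    intro f hf g hg h
    have h1 := hinj f hf g hg h
    simp only [h1] at h
    exact add_right_cancel h
  have hsurj := Finset.surjOn_of_injOn_of_card_le (s := Mon F n) (t := Mon F n) (fun f => f + G f)
    (fun f hf => hmaps f hf) hinj' le_rfl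
  have hsum : ∑ f ∈ Mon F n, l (f + G f) = ∑ f ∈ Mon F n, l f := by
    refine Finset.sum_nbij (fun f => f + G f) hmaps hinj' hsurj fun _ _ => rfl
  have h2 : ∑ f ∈ Mon F n, l (f + G f) = c * ∑ f ∈ Mon F n, l f := by
    rw [Finset.mul_sum]
    refine Finset.sum_congr rfl fun f hf => hl f hf ?_
    exact (mem_Mon.mp (hmaps f hf)).2
  rw [hsum] at h2
  unfold cc
  have : (c - 1) * ∑ f ∈ Mon F n, l f = 0 := by rw [sub_mul, ← h2]; ring
  rcases mul_eq_zero.mp this with h | h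
  · exact absurd (sub_eq_zero.mp h) hc
  · exact h

lemma RR_congr {f g : F[X]} (h : (X ^ 2 + 1 : F[X]) ∣ f - g) : RR f = RR g := by
  unfold RR; rw [modByMonic_eq_of_dvd_sub monic_sq1 h]

lemma RR_char_two (h2 : (2 : F) = 0) (f : F[X]) : RR f = (f.eval 1) ^ 2 := by
  have hn : (-1 : F) = 1 := by linear_combination -h2
  have := RR_spec (Ω := F) (1 : F) (by rw [hn, one_pow]) f
  rw [hn] at this
  simpa [sq] using this

lemma vanish_psi (χ₁ χ₂ : MulChar F ℂ) (ψ : AddChar F ℂ) (hψ : ψ ≠ 1) (M n : ℕ)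
    (hM : M = 3 ∨ (M = 2 ∧ (2 : F) = 0)) (hn : M < n) : cc (lam χ₁ χ₂ ψ) n = 0 := by
  obtain ⟨s, hs⟩ := AddChar.ne_one_iff.mp hψ
  obtain ⟨rad, hr1, hr2, hr3, hr4⟩ : ∃ rad : F[X], rad.Monic ∧ rad.natDegree = M ∧ rad.coeff 0 = 0 ∧
      ∀ f h : F[X], RR (f + h * rad) = RR f := by
    rcases hM with rfl | ⟨rfl, h2⟩
    · refine ⟨X * (X ^ 2 + 1), by monicity!, by compute_degree!, by simp, fun f h => RR_congr ⟨h * X, by ring⟩⟩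
    · refine ⟨X * (X + 1), by monicity!, by compute_degree!, by simp, fun f h => ?_⟩
      have hn : (1 + 1 : F) = 0 := by linear_combination h2
      rw [RR_char_two h2, RR_char_two h2]
      simp [hn]
  refine vanish_of _ n (fun _ => C (-s) * X ^ (n - 1 - M) * rad) (ψ s) hs ?_ (fun _ _ _ _ _ => rfl) ?_
  · intro f _
    have : (C (-s) * X ^ (n - 1 - M) * rad).natDegree ≤ n - 1 := by
      refine natDegree_mul_le.trans ?_
      have := natDegree_C_mul_X_pow_le (-s) (n - 1 - M)
      omega
    exact (degree_le_of_natDegree_le this).trans_lt (by exact_mod_cast (by omega : n - 1 < n))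
  · intro f hf hdeg
    rw [mem_Mon] at hf
    unfold lam
    rw [hr4, hdeg, hf.2, coeff_add, mul_coeff_zero _ rad, hr3, mul_zero, add_zero,
      nextCoeff_of_natDegree_pos (by omega : 0 < (f + _).natDegree), hdeg,
      nextCoeff_of_natDegree_pos (by omega : 0 < f.natDegree), hf.2, coeff_add]
    have : (C (-s) * X ^ (n - 1 - M) * rad).coeff (n - 1) = -s := by
      rw [mul_assoc, coeff_C_mul, show n - 1 = M + (n - 1 - M) by omega, Nat.add_sub_cancel_left, coeff_X_pow_mul, ← hr2, hr1.coeff_natDegree, mul_one]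
    rw [this, neg_add, neg_neg, AddChar.map_add_eq_mul]
    ring

lemma vanish_chi1 (χ₁ χ₂ : MulChar F ℂ) (h1 : χ₁ ≠ 1) (n : ℕ) (hn : 2 < n) :
    cc (lam χ₁ χ₂ 1) n = 0 := by
  obtain ⟨v, hv⟩ := MulChar.ne_one_iff.mp h1
  have hv0 : (v : F) ≠ 0 := v.ne_zero
  refine vanish_of _ n (fun f => C ((v - 1) * f.coeff 0) * (X ^ 2 + 1)) (χ₁ v) hv ?_ ?_ ?_
  · intro f _
    have : (C ((v - 1) * f.coeff 0) * (X ^ 2 + 1)).natDegree ≤ 2 := by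
      refine natDegree_mul_le.trans ?_
      rw [natDegree_sq1, natDegree_C]
    exact (degree_le_of_natDegree_le this).trans_lt (by exact_mod_cast hn)
  · intro f hf g hg h
    have h' := congrArg (fun p => coeff p 0) h
    simp at h'
    have : f.coeff 0 = g.coeff 0 := by
      apply mul_left_cancel₀ hv0; linear_combination h'
    simp only [this]
  · intro f hf hdeg
    rw [mem_Mon] at hf
    have hR : RR (f + C ((v - 1) * f.coeff 0) * (X ^ 2 + 1)) = RR f :=
      RR_congr ⟨C ((v - 1) * f.coeff 0), by ring⟩
    have hc : (f + C ((v - 1) * f.coeff 0) * (X ^ 2 + 1)).coeff 0 = v * f.coeff 0 := by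
      simp; ring
    unfold lam
    rw [hR, hdeg, hf.2, hc, mul_left_comm, map_mul χ₁]
    simp; ring

lemma vanish_chi2_two (χ₁ χ₂ : MulChar F ℂ) (h1 : χ₂ ≠ 1) (h2 : (2 : F) = 0) (n : ℕ) (hn : 2 < n) :
    cc (lam χ₁ χ₂ 1) n = 0 := by
  obtain ⟨v, hv⟩ := MulChar.ne_one_iff.mp h1
  have hv0 : (v : F) ≠ 0 := v.ne_zero
  have hrc : ringChar F = 2 := by
    have := (Nat.dvd_prime Nat.prime_two).mp (ringChar.dvd (R := F) (x := 2) (by exact_mod_cast h2))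
    rcases this with h | h
    · exact absurd h (CharP.ringChar_ne_one)
    · exact h
  obtain ⟨w, hw⟩ := FiniteField.isSquare_of_char_two hrc (v : F)
  have hw0 : w ≠ 0 := by rintro rfl; simp at hw
  refine vanish_of _ n (fun f => C ((w - 1) * f.eval 1) * X) (χ₂ v) hv ?_ ?_ ?_
  · intro f _
    have : (C ((w - 1) * f.eval 1) * X).natDegree ≤ 1 := by
      simpa using natDegree_C_mul_X_pow_le ((w - 1) * f.eval 1) 1
    exact (degree_le_of_natDegree_le this).trans_lt (by exact_mod_cast (by omega : 1 < n))
  · intro f hf g hg h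
    have h' := congrArg (fun p => eval 1 p) h
    simp at h'
    have : f.eval 1 = g.eval 1 := by
      apply mul_left_cancel₀ hw0; linear_combination h'
    simp only [this]
  · intro f hf hdeg
    rw [mem_Mon] at hf
    have hR : RR (f + C ((w - 1) * f.eval 1) * X) = v * RR f := by
      rw [RR_char_two h2, RR_char_two h2, hw]; simp; ring
    have hc : (f + C ((w - 1) * f.eval 1) * X).coeff 0 = f.coeff 0 := by
      simp
    unfold lam
    rw [hR, hdeg, hf.2, hc, map_mul χ₂]
    simp; ring

lemma exists_sq_add_sq (v : F) : ∃ a b : F, a ^ 2 + b ^ 2 = v := by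
  by_cases h : ringChar F = 2
  · obtain ⟨w, hw⟩ := FiniteField.isSquare_of_char_two h v
    exact ⟨w, 0, by rw [hw]; ring⟩
  · have hodd := FiniteField.odd_card_of_char_ne_two h
    obtain ⟨a, b, hab⟩ := FiniteField.exists_root_sum_quadratic (f := (X ^ 2 : F[X])) (g := (X ^ 2 - C v : F[X]))
      (by simp) (degree_X_pow_sub_C (by norm_num) v) hodd
    refine ⟨a, b, ?_⟩
    simp at hab
    linear_combination hab

lemma vanish_chi2 (χ₁ χ₂ : MulChar F ℂ) (h1 : χ₂ ≠ 1) (n : ℕ) (hn : 3 < n) :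
    cc (lam χ₁ χ₂ 1) n = 0 := by
  obtain ⟨v, hv⟩ := MulChar.ne_one_iff.mp h1
  have hv0 : (v : F) ≠ 0 := v.ne_zero
  obtain ⟨a, b, hab⟩ := exists_sq_add_sq (v : F)
  set Q : F[X] := X ^ 2 + 1 with hQ
  have hQm : Q.Monic := monic_sq1
  set m : F[X] := C a + C b * X with hm
  have hmm : m * (C a - C b * X) = C (v : F) - C (b ^ 2) * Q := by
    rw [← hab, hm, hQ, C_add, C_pow, C_pow]; ring
  have hRm : RR m = v := by
    obtain ⟨i, hi⟩ := exists_i F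
    apply (algebraMap F (AlgebraicClosure F)).injective
    rw [RR_spec i hi, ← hab, hm]
    simp
    linear_combination -(algebraMap F (AlgebraicClosure F) b) ^ 2 * hi
  have hdvdr : ∀ f : F[X], Q ∣ f %ₘ Q - f := fun f => ⟨-(f /ₘ Q), by
    conv_lhs => rw [← modByMonic_add_div f Q]
    rw [modByMonic_add_div f Q]
    have := modByMonic_add_div f Q
    linear_combination this⟩
  set G : F[X] → F[X] := fun f => - X ^ 2 * ((f * m) %ₘ Q - f %ₘ Q) with hG
  have hcong : ∀ f, Q ∣ f + G f - f * m := by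
    intro f
    have e1 := hdvdr f
    have e2 := hdvdr (f * m)
    have hX : (- X ^ 2 : F[X]) = 1 - Q := by rw [hQ]; ring
    have : f + G f - f * m = ((f * m) %ₘ Q - f * m) - (f %ₘ Q - f) - Q * ((f * m) %ₘ Q - f %ₘ Q) := by
      simp only [hG, hX]; ring
    rw [this]
    exact dvd_sub (dvd_sub e2 e1) (Dvd.intro _ rfl)
  refine vanish_of _ n G (χ₂ v) hv ?_ ?_ ?_
  · intro f _
    have hlt : ∀ f : F[X], (f %ₘ Q).natDegree ≤ 1 := by
      intro f
      have := natDegree_modByMonic_lt f hQm (by intro h; have := natDegree_sq1 (F := F); rw [← hQ, h] at this; simp at this)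
      have h2 : Q.natDegree = 2 := natDegree_sq1
      rw [h2] at this; omega
    have : (G f).natDegree ≤ 3 := by
      refine natDegree_mul_le.trans ?_
      rw [natDegree_neg, natDegree_X_pow]
      have := natDegree_sub_le_of_le (hlt (f * m)) (hlt f)
      omega
    exact (degree_le_of_natDegree_le this).trans_lt (by exact_mod_cast hn)
  · intro f hf g hg h
    have e : Q ∣ (f - g) * m := by
      have := dvd_sub (hcong g) (hcong f)
      rw [h] at this
      convert this using 1; ring
    have e2 : Q ∣ (f - g) * C (v : F) := by
      have h3 := Dvd.dvd.mul_right e (C a - C b * X)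
      rw [mul_assoc, hmm] at h3
      have : (f - g) * C (v : F) = (f - g) * (C (v : F) - C (b ^ 2) * Q) + Q * ((f - g) * C (b ^ 2)) := by ring
      rw [this]
      exact dvd_add h3 (Dvd.intro _ rfl)
    have e3 : Q ∣ f - g := by
      have h3 := Dvd.dvd.mul_right e2 (C (v : F)⁻¹)
      rwa [mul_assoc, ← C_mul, mul_inv_cancel₀ hv0, C_1, mul_one] at h3
    have e4 : Q ∣ f * m - g * m := by rw [← sub_mul]; exact e
    simp only [hG]
    rw [modByMonic_eq_of_dvd_sub hQm e3, modByMonic_eq_of_dvd_sub hQm e4]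
  · intro f hf hdeg
    rw [mem_Mon] at hf
    have hR : RR (f + G f) = v * RR f := by
      rw [RR_congr (hcong f), RR_mul, hRm, mul_comm]
    have hc : (f + G f).coeff 0 = f.coeff 0 := by
      simp [hG]
    unfold lam
    rw [hR, hdeg, hf.2, hc, map_mul χ₂]
    simp; ring

lemma cc_vanish (χ₁ χ₂ : MulChar F ℂ) (ψ : AddChar F ℂ) (hne : ¬ (χ₁ = 1 ∧ χ₂ = 1 ∧ ψ = 1)) (M n : ℕ)
    (hM : M = 3 ∨ (M = 2 ∧ (2 : F) = 0)) (hn : M < n) : cc (lam χ₁ χ₂ ψ) n = 0 := by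
  by_cases hψ : ψ = 1
  · subst hψ
    by_cases h1 : χ₁ = 1
    · have h2 : χ₂ ≠ 1 := fun h => hne ⟨h1, h, rfl⟩
      rcases hM with rfl | ⟨rfl, h⟩
      · exact vanish_chi2 χ₁ χ₂ h2 n hn
      · exact vanish_chi2_two χ₁ χ₂ h2 h n hn
    · exact vanish_chi1 χ₁ χ₂ h1 n (by omega)
  · exact vanish_psi χ₁ χ₂ ψ hψ M n hM hn

lemma Sk_eq_SS (χ₁ χ₂ : MulChar F ℂ) (ψ : AddChar F ℂ) {L : Type*} [Field L] [Fintype L] [Algebra F L] {k : ℕ}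
    (hk : 0 < k) (hL : Fintype.card L = Fintype.card F ^ k) : Sk (lam χ₁ χ₂ ψ) k = SS χ₁ χ₂ ψ L := by
  rw [Sk_eq_sum hk hL]
  exact Finset.sum_congr rfl fun x _ => lam_minpoly χ₁ χ₂ ψ hL x

theorem weil (χ₁ χ₂ : MulChar F ℂ) (ψ : AddChar F ℂ) (hne : ¬ (χ₁ = 1 ∧ χ₂ = 1 ∧ ψ = 1)) (M : ℕ)
    (hM : M = 3 ∨ (M = 2 ∧ (2 : F) = 0)) :
    ‖∑ x : F, χ₁ x * χ₂ (x ^ 2 + 1) * ψ x‖ ≤ M * √(Fintype.card F : ℝ) := by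
  obtain ⟨s, hs, hsum⟩ := newton_unique (cc (lam χ₁ χ₂ ψ)) (Sk (lam χ₁ χ₂ ψ)) M
    (cc_zero _ (lam_one χ₁ χ₂ ψ)) (fun n hn => cc_vanish χ₁ χ₂ ψ hne M n hM hn)
    (newton_cc _ (lam_one χ₁ χ₂ ψ) (lam_mul χ₁ χ₂ ψ))
  have h1 : ∑ x : F, χ₁ x * χ₂ (x ^ 2 + 1) * ψ x = - s.sum := by
    have h := hsum 1 one_pos
    rw [Sk_eq_SS (L := F) χ₁ χ₂ ψ one_pos (by rw [pow_one])] at h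
    simp only [SS, Algebra.norm_self, MonoidHom.id_apply, Algebra.trace_self_apply, pow_one, Multiset.map_id'] at h
    exact h
  rw [h1, norm_neg, ← hs]
  obtain ⟨K, hK⟩ := ext_bound χ₁ χ₂ ψ hne
  have hpos : (0 : ℝ) < Fintype.card F := by exact_mod_cast Fintype.card_pos
  refine powersum_bound' s K _ (Real.sqrt_pos.mpr hpos) ?_
  intro m hm
  obtain ⟨p, hp⟩ := CharP.exists F
  haveI : Fact p.Prime := ⟨CharP.char_is_prime F p⟩
  haveI : NeZero (2 * m) := ⟨by omega⟩
  letI : Fintype (FiniteField.Extension F p (2 * m)) := Fintype.ofFinite _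
  have hcard : Fintype.card (FiniteField.Extension F p (2 * m)) = Fintype.card F ^ (2 * m) := by
    have := FiniteField.natCard_extension F p (2 * m)
    rwa [Nat.card_eq_fintype_card, Nat.card_eq_fintype_card] at this
  have h2 := hsum (2 * m) (by omega)
  rw [Sk_eq_SS (L := FiniteField.Extension F p (2 * m)) χ₁ χ₂ ψ (by omega) hcard] at h2
  have h3 := hK (FiniteField.Extension F p (2 * m)) m hm (by rw [hcard, ← pow_mul, mul_comm])
  rw [h2, norm_neg] at h3
  rwa [Real.sq_sqrt hpos.le]

end Vanish
end Weil16


namespace Weil16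
open Polynomial

section Sieve
set_option linter.unusedSectionVars false

lemma expand {ι α H : Type*} [Fintype ι] [DecidableEq ι] [CommGroup H] (n : ι → ℕ) (h : ι → H) (w : ι → ℕ → ℂ)
    (Z : Finset α) (ev : α → H → ℂ) (hev : ∀ ξ ∈ Z, ∃ φ : H →* ℂ, ∀ g, ev ξ g = φ g) (Bd : ℝ)
    (hT : ∀ g, g ≠ 1 → ‖∑ ξ ∈ Z, ev ξ g‖ ≤ Bd) (hn : ∀ i, 0 < n i)
    (hind : ∀ j : ι → ℕ, (∀ i, j i < n i) → ∏ i, h i ^ j i = 1 → ∀ i, j i = 0) :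
    ‖∑ ξ ∈ Z, ∏ i, ∑ j ∈ Finset.range (n i), w i j * (ev ξ (h i)) ^ j - (∏ i, w i 0) * Z.card‖ ≤
      Bd * (∏ i, ∑ j ∈ Finset.range (n i), ‖w i j‖ - ∏ i, ‖w i 0‖) := by
  classical
  set J := Fintype.piFinset fun i => Finset.range (n i) with hJ
  have h0 : (fun _ => 0 : ι → ℕ) ∈ J := by simp [hJ, hn]
  have e1 : ∑ ξ ∈ Z, ∏ i, ∑ j ∈ Finset.range (n i), w i j * (ev ξ (h i)) ^ j =
      ∑ j ∈ J, (∏ i, w i (j i)) * ∑ ξ ∈ Z, ev ξ (∏ i, h i ^ j i) := by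
    simp only [Finset.mul_sum]
    rw [Finset.sum_comm]
    refine Finset.sum_congr rfl fun ξ hξ => ?_
    rw [Finset.prod_univ_sum]
    refine Finset.sum_congr rfl fun j _ => ?_
    obtain ⟨φ, hφ⟩ := hev ξ hξ
    rw [Finset.prod_mul_distrib, hφ, map_prod]
    simp only [map_pow, hφ]
  have e2 : ∑ ξ ∈ Z, ev ξ (∏ i, h i ^ 0) = Z.card := by
    rw [Finset.sum_congr rfl (g := fun _ => (1 : ℂ)), Finset.sum_const, nsmul_eq_mul, mul_one]
    intro ξ hξ
    obtain ⟨φ, hφ⟩ := hev ξ hξ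
    simp [hφ]
  rw [e1, ← Finset.add_sum_erase _ _ h0, e2, add_sub_cancel_left]
  have e3 : ∏ i, ∑ j ∈ Finset.range (n i), ‖w i j‖ - ∏ i, ‖w i 0‖ = ∑ j ∈ J.erase (fun _ => 0), ∏ i, ‖w i (j i)‖ := by
    rw [Finset.prod_univ_sum, ← Finset.add_sum_erase _ _ h0, add_sub_cancel_left]
  rw [e3, Finset.mul_sum]
  refine norm_sum_le_of_le _ fun j hj => ?_
  rw [norm_mul, norm_prod, mul_comm]
  refine mul_le_mul_of_nonneg_right (hT _ ?_) (Finset.prod_nonneg fun _ _ => norm_nonneg _)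
  intro h1
  rw [Finset.mem_erase] at hj
  apply hj.1
  funext i
  refine hind j ?_ h1 i
  simpa [hJ] using hj.2

variable {F E : Type*} [Field F] [Fintype F] [Field E] [Fintype E] [Algebra F E]

open Classical in
/-- the set of admissible elements of trace `a` -/
noncomputable def ZZ (E : Type*) [Field E] [Fintype E] [Algebra F E] (a : F) : Finset E :=
  Finset.univ.filter fun ξ => Algebra.trace F E ξ = a ∧ ξ ≠ 0 ∧ ξ + ξ⁻¹ ≠ 0

lemma mem_ZZ {a : F} {ξ : E} : ξ ∈ ZZ E a ↔ Algebra.trace F E ξ = a ∧ ξ ≠ 0 ∧ ξ + ξ⁻¹ ≠ 0 := by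
  simp [ZZ]

lemma card_ZZ (a : F) (hE : Fintype.card E = Fintype.card F ^ 3) :
    (Fintype.card F : ℝ) ^ 2 - 3 ≤ (ZZ E a).card := by
  classical
  have hfib : (Finset.univ.filter fun ξ : E => Algebra.trace F E ξ = a).card = Fintype.card F ^ 2 := by
    have h1 : ∀ b : F, (Finset.univ.filter fun ξ : E => Algebra.trace F E ξ = b).card =
        (Finset.univ.filter fun ξ : E => Algebra.trace F E ξ = a).card := fun b =>
      AddMonoidHom.card_fiber_eq_of_mem_range (Algebra.trace F E).toAddMonoidHom
        (Algebra.trace_surjective F E b) (Algebra.trace_surjective F E a)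
    have h2 := Finset.card_eq_sum_card_fiberwise (f := fun ξ : E => Algebra.trace F E ξ)
      (s := Finset.univ) (t := Finset.univ) (fun _ _ => Finset.mem_coe.mpr (Finset.mem_univ _))
    rw [Finset.sum_congr rfl (fun b _ => h1 b), Finset.sum_const, Finset.card_univ, Finset.card_univ, hE, smul_eq_mul] at h2
    have hpos : 0 < Fintype.card F := Fintype.card_pos
    apply Nat.eq_of_mul_eq_mul_left hpos
    rw [← h2]; ring
  set g : E[X] := X * (X ^ 2 + 1) with hg
  have hgd : g.natDegree = 3 := by rw [hg]; compute_degree!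
  have hg0 : g ≠ 0 := by intro h; rw [h] at hgd; simp at hgd
  have hsub : (Finset.univ.filter fun ξ : E => Algebra.trace F E ξ = a) ⊆ ZZ E a ∪ g.roots.toFinset := by
    intro ξ hξ
    rw [Finset.mem_filter] at hξ
    rw [Finset.mem_union, mem_ZZ, Multiset.mem_toFinset, mem_roots hg0]
    by_cases h0 : ξ = 0
    · right; simp [IsRoot, hg, h0]
    · by_cases h1 : ξ + ξ⁻¹ = 0
      · right
        have : ξ ^ 2 + 1 = 0 := by
          have : ξ * (ξ + ξ⁻¹) = ξ ^ 2 + 1 := by field_simp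
          rw [← this, h1, mul_zero]
        simp [IsRoot, hg, this]
      · left; exact ⟨hξ.2, h0, h1⟩
  have h3 := (Finset.card_le_card hsub).trans (Finset.card_union_le _ _)
  have h4 : g.roots.toFinset.card ≤ 3 := by
    rw [← hgd]; exact (Multiset.toFinset_card_le _).trans (card_roots' _)
  rw [hfib] at h3
  have : Fintype.card F ^ 2 ≤ (ZZ E a).card + 3 := by omega
  have h5 : (Fintype.card F : ℝ) ^ 2 ≤ (ZZ E a).card + 3 := by exact_mod_cast this
  linarith

lemma T_bound (χ₁ χ₂ : MulChar E ℂ) (a : F) (hne : ¬ (χ₁ = 1 ∧ χ₂ = 1)) (M : ℕ)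
    (hM : M = 3 ∨ (M = 2 ∧ (2 : E) = 0)) :
    ‖∑ ξ ∈ ZZ E a, χ₁ ξ * χ₂ (ξ + ξ⁻¹)‖ ≤ M * √(Fintype.card E : ℝ) := by
  classical
  have hpos : (0 : ℝ) < Fintype.card F := by exact_mod_cast Fintype.card_pos
  have hterm : ∀ ξ : E, (if ξ ∈ ZZ E a then χ₁ ξ * χ₂ (ξ + ξ⁻¹) else 0) =
      if Algebra.trace F E ξ - a = 0 then (χ₁ * χ₂⁻¹) ξ * χ₂ (ξ ^ 2 + 1) else 0 := by
    intro ξ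
    have e : χ₁ ξ * χ₂ (ξ + ξ⁻¹) = (χ₁ * χ₂⁻¹) ξ * χ₂ (ξ ^ 2 + 1) := by
      by_cases h0 : ξ = 0
      · simp [h0, MulChar.map_zero]
      · have : ξ + ξ⁻¹ = ξ⁻¹ * (ξ ^ 2 + 1) := by field_simp
        rw [this, map_mul, MulChar.mul_apply, MulChar.inv_apply']; ring
    rw [← e]
    simp only [sub_eq_zero, mem_ZZ]
    by_cases ht : Algebra.trace F E ξ = a
    · by_cases h0 : ξ = 0
      · simp [h0, MulChar.map_zero]
      · by_cases h1 : ξ + ξ⁻¹ = 0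
        · simp [h1, MulChar.map_zero]
        · simp [ht, h0, h1]
    · simp [ht]
  have hsum : (Fintype.card F : ℂ) * ∑ ξ ∈ ZZ E a, χ₁ ξ * χ₂ (ξ + ξ⁻¹) =
      ∑ ψ : AddChar F ℂ, ψ (-a) * ∑ ξ : E, (χ₁ * χ₂⁻¹) ξ * χ₂ (ξ ^ 2 + 1) *
        (ψ.compAddMonoidHom (Algebra.trace F E).toAddMonoidHom) ξ := by
    simp only [Finset.mul_sum]
    rw [Finset.sum_comm, ← Finset.mul_sum, ← Finset.univ_inter (ZZ E a), ← Finset.sum_ite_mem, Finset.mul_sum]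
    refine Finset.sum_congr rfl fun ξ _ => ?_
    rw [hterm]
    have : ∀ ψ : AddChar F ℂ, ψ (-a) * ((χ₁ * χ₂⁻¹) ξ * χ₂ (ξ ^ 2 + 1) *
        (ψ.compAddMonoidHom (Algebra.trace F E).toAddMonoidHom) ξ) =
        ((χ₁ * χ₂⁻¹) ξ * χ₂ (ξ ^ 2 + 1)) * ψ (Algebra.trace F E ξ - a) := by
      intro ψ
      rw [sub_eq_add_neg, AddChar.map_add_eq_mul]
      simp only [AddChar.compAddMonoidHom_apply, LinearMap.toAddMonoidHom_coe]
      ring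
    simp only [this]
    rw [← Finset.mul_sum, AddChar.sum_apply_eq_ite]
    split_ifs <;> ring
  have hcard : Fintype.card (AddChar F ℂ) = Fintype.card F := AddChar.card_eq
  have hb : ‖(Fintype.card F : ℂ) * ∑ ξ ∈ ZZ E a, χ₁ ξ * χ₂ (ξ + ξ⁻¹)‖ ≤ (Fintype.card F : ℝ) * (M * √(Fintype.card E : ℝ)) := by
    rw [hsum]
    refine ((norm_sum_le _ _).trans (Finset.sum_le_sum (g := fun _ => M * √(Fintype.card E : ℝ)) fun ψ _ => ?_)).trans ?_
    · rw [norm_mul, AddChar.norm_apply, one_mul]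
      refine weil (χ₁ * χ₂⁻¹) χ₂ _ ?_ M hM
      rintro ⟨h1, h2, -⟩
      subst h2
      exact hne ⟨by simpa using h1, rfl⟩
    · rw [Finset.sum_const, Finset.card_univ, hcard, nsmul_eq_mul]
  rw [norm_mul, Complex.norm_natCast] at hb
  exact le_of_mul_le_mul_left hb hpos

/-- `ξ` or `ξ + ξ⁻¹` -/
noncomputable def yv (ξ : E) (b : Bool) : E := if b then ξ else ξ + ξ⁻¹

/-- the pair of characters attached to an index -/
noncomputable def hh (χ : ℕ → MulChar E ℂ) (i : ℕ × Bool) : MulChar E ℂ × MulChar E ℂ :=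
  if i.2 then (χ i.1, 1) else (1, χ i.1)

open Classical in
/-- normalised indicator of being free of the prime `i.1` -/
noncomputable def fv (χ : ℕ → MulChar E ℂ) (i : ℕ × Bool) (ξ : E) : ℝ :=
  if χ i.1 (yv ξ i.2) = 1 then 0 else (i.1 : ℝ) / (i.1 - 1)

lemma indep (χ : ℕ → MulChar E ℂ) (I : Finset (ℕ × Bool)) (hI : ∀ i ∈ I, i.1.Prime ∧ orderOf (χ i.1) = i.1)
    (j : I → ℕ) (hj : ∀ i : I, j i < i.1.1) (h : ∏ i : I, hh χ i ^ j i = 1) (i : I) : j i = 0 := by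
  classical
  obtain ⟨⟨l, b⟩, hi⟩ := i
  set m := ∏ p ∈ (I.image Prod.fst).erase l, p with hm
  have hlp : l.Prime := (hI _ hi).1
  let π : MulChar E ℂ × MulChar E ℂ →* MulChar E ℂ := if b then MonoidHom.fst _ _ else MonoidHom.snd _ _
  have hπ : ∀ x : I, x ≠ ⟨(l, b), hi⟩ → (π (hh χ x)) ^ m = 1 := by
    rintro ⟨⟨p, b'⟩, hx⟩ hne
    by_cases hb : b' = b
    · subst hb
      have hpl : p ≠ l := by rintro rfl; exact hne rfl
      have : π (hh χ (p, b')) = χ p := by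
        simp only [π, hh]; cases b' <;> simp
      rw [this, ← orderOf_dvd_iff_pow_eq_one, (hI _ hx).2]
      exact Finset.dvd_prod_of_mem (fun p => p) (Finset.mem_erase.mpr ⟨hpl, Finset.mem_image_of_mem Prod.fst hx⟩)
    · have : π (hh χ (p, b')) = 1 := by
        simp only [π, hh]; cases b' <;> cases b <;> simp_all
      rw [this, one_pow]
  have h1 := congrArg (fun g => (π g) ^ m) h
  simp only [map_prod, map_one, one_pow, map_pow, ← Finset.prod_pow] at h1
  rw [Finset.prod_eq_single_of_mem ⟨(l, b), hi⟩ (Finset.mem_univ _)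
    (fun x _ hx => by rw [← pow_mul, mul_comm, pow_mul, hπ x hx, one_pow])] at h1
  have h2 : π (hh χ (l, b)) = χ l := by
    simp only [π, hh]; cases b <;> simp
  rw [h2, ← pow_mul, ← orderOf_dvd_iff_pow_eq_one, (hI _ hi).2] at h1
  have hcop : Nat.Coprime l m := by
    apply Nat.Coprime.prod_right
    intro p hp
    rw [Finset.mem_erase, Finset.mem_image] at hp
    obtain ⟨hpl, x, hx, rfl⟩ := hp
    exact (Nat.coprime_primes hlp (hI x hx).1).mpr (Ne.symm hpl)
  exact Nat.eq_zero_of_dvd_of_lt (hcop.dvd_of_dvd_mul_right h1) (hj ⟨(l, b), hi⟩)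

lemma wsum (l : ℕ) (hl : 2 ≤ l) (z : ℂ) (hz : z ^ l = 1) (c : ℂ) [Decidable (z = 1)] :
    ∑ j ∈ Finset.range l, (if j = 0 then c else -(1 / ((l : ℂ) - 1))) * z ^ j =
      c - 1 + if z = 1 then 0 else (l : ℂ) / (l - 1) := by
  have hl1 : (l : ℂ) - 1 ≠ 0 := by
    intro h
    have : (l : ℂ) = 1 := sub_eq_zero.mp h
    have : l = 1 := by exact_mod_cast this
    omega
  obtain ⟨t, rfl⟩ : ∃ t, l = t + 1 := ⟨l - 1, by omega⟩
  have hg : ∑ j ∈ Finset.range t, z ^ (j + 1) = (if z = 1 then ((t + 1 : ℕ) : ℂ) else 0) - 1 := by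
    have h1 : ∑ j ∈ Finset.range (t + 1), z ^ j = if z = 1 then ((t + 1 : ℕ) : ℂ) else 0 := by
      split_ifs with h
      · simp [h]
      · rw [geom_sum_eq h, hz]; simp
    rw [← h1, Finset.sum_range_succ']; simp
  rw [Finset.sum_range_succ']
  simp only [Nat.succ_ne_zero, if_false, if_true, pow_zero, mul_one]
  rw [← Finset.mul_sum, hg]
  split_ifs with h
  · field_simp; ring
  · field_simp; ring

lemma core (χ : ℕ → MulChar E ℂ) (I : Finset (ℕ × Bool)) (hI : ∀ i ∈ I, i.1.Prime ∧ orderOf (χ i.1) = i.1)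
    (a : F) (M : ℕ) (hM : M = 3 ∨ (M = 2 ∧ (2 : E) = 0)) (c : ℕ × Bool → ℝ) :
    |∑ ξ ∈ ZZ E a, ∏ i ∈ I, (c i - 1 + fv χ i ξ) - (∏ i ∈ I, c i) * (ZZ E a).card| ≤
      (M * √(Fintype.card E : ℝ)) * (∏ i ∈ I, (|c i| + 1) - ∏ i ∈ I, |c i|) := by
  classical
  let w : ℕ × Bool → ℕ → ℂ := fun i j => if j = 0 then (c i : ℂ) else -(1 / ((i.1 : ℂ) - 1))
  have key := expand (ι := I) (fun i => i.1.1) (fun i => hh χ i.1) (fun i => w i.1) (ZZ E a)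
    (fun ξ g => g.1 ξ * g.2 (ξ + ξ⁻¹)) ?_ (M * √(Fintype.card E : ℝ)) ?_ ?_ (indep χ I hI)
  · have hev : ∀ ξ ∈ ZZ E a, ∀ i, (hh χ i).1 ξ * (hh χ i).2 (ξ + ξ⁻¹) = χ i.1 (yv ξ i.2) := by
      intro ξ hξ i
      rw [mem_ZZ] at hξ
      obtain ⟨-, h0, h1⟩ := hξ
      obtain ⟨p, b⟩ := i
      cases b <;> simp [hh, yv, MulChar.one_apply, h0, h1]
    have hy : ∀ ξ ∈ ZZ E a, ∀ b, yv ξ b ≠ 0 := by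
      intro ξ hξ b
      rw [mem_ZZ] at hξ
      cases b <;> simp [yv, hξ]
    have e1 : ∑ ξ ∈ ZZ E a, ∏ i : I, ∑ j ∈ Finset.range i.1.1, w i.1 j * ((hh χ i.1).1 ξ * (hh χ i.1).2 (ξ + ξ⁻¹)) ^ j =
        ((∑ ξ ∈ ZZ E a, ∏ i ∈ I, (c i - 1 + fv χ i ξ) : ℝ) : ℂ) := by
      push_cast
      refine Finset.sum_congr rfl fun ξ hξ => ?_
      rw [← Finset.prod_coe_sort I]
      refine Finset.prod_congr rfl fun i _ => ?_
      rw [hev ξ hξ]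
      have hz : (χ i.1.1 (yv ξ i.1.2)) ^ i.1.1 = 1 := by
        have h1 : χ i.1.1 ^ i.1.1 = 1 := by
          conv_lhs => rw [← (hI i.1 i.2).2]
          rw [(hI i.1 i.2).2]
          exact orderOf_dvd_iff_pow_eq_one.mp (by rw [(hI i.1 i.2).2])
        rw [← MulChar.pow_apply' _ (hI i.1 i.2).1.ne_zero, h1, MulChar.one_apply (hy ξ hξ _).isUnit]
      rw [wsum i.1.1 (hI i.1 i.2).1.two_le _ hz (c i.1)]
      unfold fv
      split_ifs <;> simp
    have e2 : ∏ i : I, w i.1 0 = ((∏ i ∈ I, c i : ℝ) : ℂ) := by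
      rw [Finset.prod_coe_sort I (fun i => w i 0)]
      simp [w]
    have e3 : ∏ i : I, ∑ j ∈ Finset.range i.1.1, ‖w i.1 j‖ = ∏ i ∈ I, (|c i| + 1) := by
      rw [← Finset.prod_coe_sort I]
      refine Finset.prod_congr rfl fun i _ => ?_
      have h2 := (hI i.1 i.2).1.two_le
      obtain ⟨t, ht⟩ : ∃ t, i.1.1 = t + 1 := ⟨i.1.1 - 1, by omega⟩
      have htp : (0 : ℝ) < t := by
        have : 0 < t := by omega
        exact_mod_cast this
      rw [ht, Finset.sum_range_succ']
      simp only [w, Nat.succ_ne_zero, if_false, if_true, ht]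
      simp
      rw [mul_inv_cancel₀ htp.ne']; ring
    have e4 : ∏ i : I, ‖w i.1 0‖ = ∏ i ∈ I, |c i| := by
      rw [Finset.prod_coe_sort I (fun i => ‖w i 0‖)]
      simp [w]
    rw [e1, e2, e3, e4] at key
    rw [← Real.norm_eq_abs, ← Complex.norm_real]
    push_cast at key ⊢
    exact key
  · intro ξ hξ
    rw [mem_ZZ] at hξ
    obtain ⟨-, h0, h1⟩ := hξ
    refine ⟨{ toFun := fun g => g.1 ξ * g.2 (ξ + ξ⁻¹), map_one' := ?_, map_mul' := ?_ }, fun g => rfl⟩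
    · simp [MulChar.one_apply, h0, h1]
    · intro g g'
      simp only [Prod.fst_mul, Prod.snd_mul, MulChar.mul_apply]; ring
  · rintro ⟨g1, g2⟩ hg
    refine T_bound g1 g2 a ?_ M hM
    rintro ⟨rfl, rfl⟩
    exact hg rfl
  · intro i; exact (hI i.1 i.2).1.pos

end Sieve
end Weil16


namespace Weil16
open Polynomial

section Final
set_option linter.unusedSectionVars false

variable {F E : Type*} [Field F] [Fintype F] [Field E] [Fintype E] [Algebra F E]

lemma primitive_of_free (χ : ℕ → MulChar E ℂ) (hχ : ∀ l : ℕ, l.Prime → l ∣ Fintype.card E - 1 → orderOf (χ l) = l)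
    (y : E) (hy : y ≠ 0) (h : ∀ l : ℕ, l.Prime → l ∣ Fintype.card E - 1 → χ l y ≠ 1) :
    orderOf y = Fintype.card E - 1 := by
  classical
  have hcard : Fintype.card Eˣ = Fintype.card E - 1 := Fintype.card_units E
  have hpos : 0 < Fintype.card E - 1 := by rw [← hcard]; exact Fintype.card_pos
  refine orderOf_eq_of_pow_and_pow_div_prime hpos (FiniteField.pow_card_sub_one_eq_one y hy) ?_
  intro l hl hd h1
  apply h l hl hd
  obtain ⟨z, hz⟩ := cyclic_pow (G := Eˣ) ((Fintype.card E - 1) / l) l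
    (by rw [Nat.card_eq_fintype_card, hcard, Nat.div_mul_cancel hd]) (Units.mk0 y hy)
    (by ext; simpa using h1)
  have hy' : y = (z : E) ^ l := by
    have := congrArg (fun u : Eˣ => (u : E)) hz
    simpa using this.symm
  have hl1 : χ l ^ l = 1 := orderOf_dvd_iff_pow_eq_one.mp (by rw [hχ l hl hd])
  rw [hy', map_pow, ← MulChar.pow_apply' _ hl.ne_zero, hl1, MulChar.one_apply z.isUnit]

lemma fv_nonneg (χ : ℕ → MulChar E ℂ) (i : ℕ × Bool) (hi : i.1.Prime) (ξ : E) : 0 ≤ fv χ i ξ := by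
  have : (2 : ℝ) ≤ i.1 := by exact_mod_cast hi.two_le
  unfold fv
  split_ifs
  · exact le_rfl
  · exact div_nonneg (by linarith) (by linarith)

lemma fv_le (χ : ℕ → MulChar E ℂ) (i : ℕ × Bool) (hi : i.1.Prime) (ξ : E) : (1 - 1 / (i.1 : ℝ)) * fv χ i ξ ≤ 1 := by
  have h2 : (2 : ℝ) ≤ i.1 := by exact_mod_cast hi.two_le
  unfold fv
  split_ifs
  · simp
  · have h1 : (i.1 : ℝ) - 1 ≠ 0 := by linarith
    have h0 : (i.1 : ℝ) ≠ 0 := by linarith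
    apply le_of_eq
    field_simp

lemma fv_ne (χ : ℕ → MulChar E ℂ) (i : ℕ × Bool) (ξ : E) (h : fv χ i ξ ≠ 0) : χ i.1 (yv ξ i.2) ≠ 1 := by
  intro h1
  apply h
  simp [fv, h1]

theorem sieve (S₁ S₂ : Finset ℕ) (hp : ∀ l, l ∈ S₁ ∪ S₂ ↔ l.Prime ∧ l ∣ Fintype.card E - 1)
    (hdisj : Disjoint S₁ S₂) (a : F) (hE : Fintype.card E = Fintype.card F ^ 3)
    (M : ℕ) (hM : M = 3 ∨ (M = 2 ∧ (2 : E) = 0)) (δ : ℝ)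
    (hδdef : δ = 1 - 2 * ∑ p ∈ S₂, (1 : ℝ) / p) (hδ : 0 < δ)
    (hcond : M * √(Fintype.card E : ℝ) * 2 ^ (2 * S₁.card) * (2 + (2 * (S₂.card : ℝ) - 1) / δ) < (Fintype.card F : ℝ) ^ 2) :
    ∃ ξ : E, orderOf ξ = Fintype.card E - 1 ∧ orderOf (ξ + ξ⁻¹) = Fintype.card E - 1 ∧ Algebra.trace F E ξ = a := by
  classical
  by_contra hno
  have hex : ∀ l : ℕ, ∃ χ : MulChar E ℂ, l.Prime → l ∣ Fintype.card E - 1 → orderOf χ = l := by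
    intro l
    by_cases h : l.Prime ∧ l ∣ Fintype.card E - 1
    · obtain ⟨χ, hχ⟩ := MulChar.exists_mulChar_orderOf E h.2 (Complex.isPrimitiveRoot_exp l h.1.ne_zero)
      exact ⟨χ, fun _ _ => hχ⟩
    · exact ⟨1, fun h1 h2 => absurd ⟨h1, h2⟩ h⟩
  choose χ hχ using hex
  set Z := ZZ E a with hZ
  set I := S₁ ×ˢ (Finset.univ : Finset Bool) with hI
  set I₂ := S₂ ×ˢ (Finset.univ : Finset Bool) with hI₂
  set Bd := M * √(Fintype.card E : ℝ) with hBd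
  have hpr₁ : ∀ i ∈ I, i.1.Prime ∧ orderOf (χ i.1) = i.1 := by
    intro i hi
    have := (hp i.1).mp (Finset.mem_union_left _ (Finset.mem_product.mp hi).1)
    exact ⟨this.1, hχ _ this.1 this.2⟩
  have hpr₂ : ∀ i ∈ I₂, i.1.Prime ∧ orderOf (χ i.1) = i.1 := by
    intro i hi
    have := (hp i.1).mp (Finset.mem_union_right _ (Finset.mem_product.mp hi).1)
    exact ⟨this.1, hχ _ this.1 this.2⟩
  have hcardI : I.card = 2 * S₁.card := by simp [hI, mul_comm]
  have hcardI₂ : I₂.card = 2 * S₂.card := by simp [hI₂, mul_comm]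
  set b : E → ℝ := fun ξ => ∏ i ∈ I, fv χ i ξ with hb
  have hb0 : ∀ ξ, 0 ≤ b ξ := fun ξ => Finset.prod_nonneg fun i hi => fv_nonneg χ i (hpr₁ i hi).1 ξ
  set W := ∑ ξ ∈ Z, b ξ with hW
  set D := Bd * 2 ^ (2 * S₁.card) with hD
  -- first bound
  have B1 : (Fintype.card F : ℝ) ^ 2 - D ≤ W := by
    have h := core χ I hpr₁ a M hM (fun _ => 1)
    simp only [sub_self, zero_add, Finset.prod_const_one, one_mul, abs_one, Finset.prod_const, hcardI] at h
    have h1 := neg_le_of_abs_le h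
    have h2 := card_ZZ (E := E) a hE
    have h3 : (3 : ℝ) ≤ Bd := by
      have hM2 : (2 : ℝ) ≤ M := by
        have : 2 ≤ M := by omega
        exact_mod_cast this
      have hc : (2 : ℝ) ≤ √(Fintype.card E : ℝ) := by
        apply Real.le_sqrt_of_sq_le
        rw [hE]
        have : 2 ≤ Fintype.card F := Fintype.one_lt_card
        have : (2 : ℝ) ≤ Fintype.card F := by exact_mod_cast this
        push_cast
        have h3 : (2 : ℝ) ^ 3 ≤ (Fintype.card F : ℝ) ^ 3 := by gcongr
        linarith
      rw [hBd]; nlinarith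
    have h4 : Bd * ((1 + 1) ^ (2 * S₁.card) - 1) = D - Bd := by rw [hD]; norm_num; ring
    rw [← hBd, h4] at h1
    have h5 : W = ∑ ξ ∈ ZZ E a, ∏ i ∈ I, fv χ i ξ := rfl
    linarith
  -- second bound
  have B2 : ∀ x ∈ I₂, W - D ≤ ∑ ξ ∈ Z, fv χ x ξ * b ξ := by
    intro x hx
    have hxI : x ∉ I := by
      intro h
      exact Finset.disjoint_left.mp hdisj (Finset.mem_product.mp h).1 (Finset.mem_product.mp hx).1
    have h := core χ (insert x I) (by
      intro i hi
      rcases Finset.mem_insert.mp hi with rfl | hi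
      · exact hpr₂ _ hx
      · exact hpr₁ i hi) a M hM (fun i => if i = x then 0 else 1)
    have e1 : ∀ ξ, ∏ i ∈ insert x I, ((if i = x then (0 : ℝ) else 1) - 1 + fv χ i ξ) = fv χ x ξ * b ξ - b ξ := by
      intro ξ
      rw [Finset.prod_insert hxI, if_pos rfl, Finset.prod_congr rfl (g := fun i => fv χ i ξ)]
      · ring
      · intro i hi
        rw [if_neg (by rintro rfl; exact hxI hi)]; ring
    have e2 : ∏ i ∈ insert x I, (if i = x then (0 : ℝ) else 1) = 0 :=
      Finset.prod_eq_zero (Finset.mem_insert_self x I) (by simp)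
    have e3 : ∏ i ∈ insert x I, |if i = x then (0 : ℝ) else 1| = 0 :=
      Finset.prod_eq_zero (Finset.mem_insert_self x I) (by simp)
    have e4 : ∏ i ∈ insert x I, (|if i = x then (0 : ℝ) else 1| + 1) = 2 ^ (2 * S₁.card) := by
      rw [Finset.prod_insert hxI, if_pos rfl, Finset.prod_congr rfl (g := fun i => (2 : ℝ)), Finset.prod_const, hcardI]
      · simp
      · intro i hi
        rw [if_neg (by rintro rfl; exact hxI hi)]; norm_num
    simp only [e1] at h
    rw [e2, e3, e4, zero_mul, sub_zero, sub_zero, Finset.sum_sub_distrib] at h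
    have h1 := neg_le_of_abs_le h
    have h5 : W = ∑ ξ ∈ ZZ E a, b ξ := rfl
    rw [← h5] at h1
    linarith
  -- sieve inequality
  have B3 : ∑ x ∈ I₂, (1 - 1 / (x.1 : ℝ)) * ∑ ξ ∈ Z, fv χ x ξ * b ξ ≤ (2 * (S₂.card : ℝ) - 1) * W := by
    have e : ∑ x ∈ I₂, (1 - 1 / (x.1 : ℝ)) * ∑ ξ ∈ Z, fv χ x ξ * b ξ =
        ∑ ξ ∈ Z, (∑ x ∈ I₂, (1 - 1 / (x.1 : ℝ)) * fv χ x ξ) * b ξ := by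
      simp only [Finset.mul_sum, Finset.sum_mul]
      rw [Finset.sum_comm]
      exact Finset.sum_congr rfl fun _ _ => Finset.sum_congr rfl fun _ _ => by ring
    rw [e, hW, Finset.mul_sum]
    refine Finset.sum_le_sum fun ξ hξ => ?_
    by_cases hbz : b ξ = 0
    · rw [hbz]; simp
    · refine mul_le_mul_of_nonneg_right ?_ (hb0 ξ)
      obtain ⟨x₀, hx₀, hf⟩ : ∃ x₀ ∈ I₂, fv χ x₀ ξ = 0 := by
        by_contra hcon
        push Not at hcon
        apply hno
        rw [hZ, mem_ZZ] at hξ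
        have hall : ∀ l : ℕ, l.Prime → l ∣ Fintype.card E - 1 → ∀ c : Bool, χ l (yv ξ c) ≠ 1 := by
          intro l hl hd c
          refine fv_ne χ (l, c) ξ ?_
          rcases Finset.mem_union.mp ((hp l).mpr ⟨hl, hd⟩) with h | h
          · exact Finset.prod_ne_zero_iff.mp hbz (l, c) (Finset.mem_product.mpr ⟨h, Finset.mem_univ _⟩)
          · exact hcon (l, c) (Finset.mem_product.mpr ⟨h, Finset.mem_univ _⟩)
        refine ⟨ξ, primitive_of_free χ hχ ξ hξ.2.1 fun l hl hd => ?_,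
          primitive_of_free χ hχ _ hξ.2.2 fun l hl hd => ?_, hξ.1⟩
        · simpa [yv] using hall l hl hd true
        · simpa [yv] using hall l hl hd false
      rw [← Finset.add_sum_erase _ _ hx₀, hf, mul_zero, zero_add]
      refine (Finset.sum_le_sum (g := fun _ => (1 : ℝ)) fun x hx =>
        fv_le χ x (hpr₂ x (Finset.mem_of_mem_erase hx)).1 ξ).trans ?_
      rw [Finset.sum_const, nsmul_eq_mul, mul_one, Finset.card_erase_of_mem hx₀, hcardI₂]
      have : 0 < I₂.card := Finset.card_pos.mpr ⟨x₀, hx₀⟩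
      rw [hcardI₂] at this
      rw [Nat.cast_sub (by omega)]
      push_cast; exact le_rfl
  have B4 : (2 * (S₂.card : ℝ) - 1 + δ) * (W - D) ≤ ∑ x ∈ I₂, (1 - 1 / (x.1 : ℝ)) * ∑ ξ ∈ Z, fv χ x ξ * b ξ := by
    have e : 2 * (S₂.card : ℝ) - 1 + δ = ∑ x ∈ I₂, (1 - 1 / (x.1 : ℝ)) := by
      rw [hI₂, Finset.sum_product, hδdef]
      simp only [Finset.sum_const, Finset.card_univ, Fintype.card_bool, nsmul_eq_mul]
      rw [← Finset.mul_sum, Finset.sum_sub_distrib]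
      simp; ring
    rw [e, Finset.sum_mul]
    refine Finset.sum_le_sum fun x hx => mul_le_mul_of_nonneg_left (B2 x hx) ?_
    have h2 : (2 : ℝ) ≤ x.1 := by exact_mod_cast (hpr₂ x hx).1.two_le
    have : 1 / (x.1 : ℝ) ≤ 1 := by rw [div_le_one (by linarith)]; linarith
    linarith
  have B5 : δ * W ≤ (2 * (S₂.card : ℝ) - 1 + δ) * D := by nlinarith
  have B6 : δ * (Fintype.card F : ℝ) ^ 2 ≤ δ * (D * (2 + (2 * (S₂.card : ℝ) - 1) / δ)) := by
    have : δ * (D * (2 + (2 * (S₂.card : ℝ) - 1) / δ)) = D * (2 * δ + (2 * (S₂.card : ℝ) - 1)) := by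
      field_simp
    rw [this]
    nlinarith [mul_le_mul_of_nonneg_left B1 hδ.le]
  exact absurd (le_of_mul_le_mul_left B6 hδ) (not_le.mpr hcond)

end Final
end Weil16


/-- Cohen–Gupta criterion (Theorem 7.1): write `q^3 - 1 = k·P` with `gcd(k,P) = 1`
and `ω(P) = s ≥ 1`, the radical of `P` being the product of the distinct primes
`p_1, …, p_s`. Put `δ = 1 - 2∑ 1/pᵢ` and `C_q = 2` for even `q`, `C_q = 3` for
odd `q`. If `δ > 0` and `q^(1/2) > C_q · 2^(2ω(k)) · (2 + (2s-1)/δ)`, then for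
every `a ∈ F_q` there is a primitive `ξ ∈ F_{q^3}` with `ξ + ξ⁻¹` primitive and
`Tr ξ = a`. -/
theorem stmt16 (q : ℕ) (hq : IsPrimePow q) (k P : ℕ)
    (hfact : q ^ 3 - 1 = k * P) (hcop : Nat.gcd k P = 1)
    (hs : 1 ≤ P.primeFactors.card)
    (δ : ℝ) (hδdef : δ = 1 - 2 * ∑ p ∈ P.primeFactors, (1 : ℝ) / p) (hδ : 0 < δ)
    (hcond : (q : ℝ) ^ ((1 : ℝ) / 2) >
      (if Even q then (2 : ℝ) else 3) * 2 ^ (2 * k.primeFactors.card) *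
        (2 + (2 * (P.primeFactors.card : ℝ) - 1) / δ))
    (F E : Type*) [Field F] [Fintype F] [Field E] [Fintype E] [Algebra F E]
    (hF : Fintype.card F = q) (hE : Fintype.card E = q ^ 3) (a : F) :
    ∃ ξ : E, orderOf ξ = q ^ 3 - 1 ∧ orderOf (ξ + ξ⁻¹) = q ^ 3 - 1 ∧
      Algebra.trace F E ξ = a := by
  rw [← hE]
  subst hF
  have hc1 : 1 < Fintype.card E := Fintype.one_lt_card
  rw [← hE] at hfact
  have hkP : k * P ≠ 0 := by omega
  have hk0 : k ≠ 0 := fun h => hkP (by rw [h, zero_mul])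
  have hP0 : P ≠ 0 := fun h => hkP (by rw [h, mul_zero])
  obtain ⟨M, hM, hMc⟩ : ∃ M : ℕ, (M = 3 ∨ (M = 2 ∧ (2 : E) = 0)) ∧
      (if Even (Fintype.card F) then (2:ℝ) else 3) = M := by
    by_cases he : Even (Fintype.card F)
    · refine ⟨2, Or.inr ⟨rfl, ?_⟩, by rw [if_pos he]; norm_num⟩
      have hev : Fintype.card E % 2 = 0 := by
        rw [hE]; exact Nat.even_iff.mp (he.pow_of_ne_zero (by norm_num))
      have hr := FiniteField.even_card_iff_char_two.mpr hev
      have := ringChar.Nat.cast_ringChar (R := E)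
      rw [hr] at this
      exact_mod_cast this
    · exact ⟨3, Or.inl rfl, by rw [if_neg he]; norm_num⟩
  refine Weil16.sieve k.primeFactors P.primeFactors ?_ (Nat.Coprime.disjoint_primeFactors hcop) a hE M hM δ hδdef hδ ?_
  · intro l
    rw [← Nat.primeFactors_mul hk0 hP0, ← hfact, Nat.mem_primeFactors]
    rw [← hfact] at hkP
    tauto
  · rw [hMc, ← Real.sqrt_eq_rpow] at hcond
    have hq0 : (0 : ℝ) < Fintype.card F := by exact_mod_cast Fintype.card_pos
    have hs0 := Real.sqrt_pos.mpr hq0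
    have hss := Real.mul_self_sqrt hq0.le
    have hE' : √(Fintype.card E : ℝ) = Fintype.card F * √(Fintype.card F : ℝ) := by
      rw [hE]; push_cast
      rw [show (Fintype.card F : ℝ) ^ 3 = (Fintype.card F : ℝ) ^ 2 * Fintype.card F by ring,
        Real.sqrt_mul (by positivity), Real.sqrt_sq hq0.le]
    rw [hE']
    have h := mul_lt_mul_of_pos_left hcond (mul_pos hq0 hs0)
    calc _ = _ := by ring
      _ < _ := h
      _ = _ := by rw [mul_assoc, hss]; ring
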